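/- arXiv:1012.4666 — 2 statements merged into one kernel-verified Lean document; each statement's English description precedes it below -/
import Mathlib

section
/- Favard's inequality: for every bounded convex body Ω in the plane with circumradius R(Ω), one has |Ω| ≥ R(Ω)·(P(Ω) − 4·R(Ω)). -/
/-!
The circumcircle of `Ω` meets `Ω` in two antipodal points or in the vertices of a triangle having the
circumcentre in its interior; otherwise a shifted, smaller disk would contain `Ω` (`zero_mem_hull`,
`exists_contact`). The diameter, or the triangle, cuts `Ω` into caps, each of which is bounded by a
chord of the circle and an arc of the frontier of `Ω`, with the centre not strictly on its side of the
chord. The key estimate is that each cap satisfies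

  `R * length of the arc ≤ R * length of the chord + area of the cap`   (`cap_bound`).

Adding these up gives `R * P ≤ 4 * R ^ 2 + |Ω|` at once in the case of a diameter (`favard_two`). For a
triangle with sides `u, v, w` and area `T` it gives `R * P ≤ R * (u + v + w) + |Ω| - T`, and
`R * (u + v + w) ≤ 4 * R ^ 2 + T` because `T = u * v * w / (4 * R)` and the sides are at most `2 * R`
(`sides_ineq`, `favard_three`).

For the key estimate, rotate the chord to be horizontal with the cap above it. The arc is the graph of
a concave function, so its length is bounded by its variation, a supremum of lengths of inscribed
polygons (`hausdorff_image_le_of_variation`), and areas of inscribed trapezoids bound the area of the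
cap from below (`trapezoid_le`). It remains to see that, for a right-turning polygonal path in the
upper half disk whose ends lie on the circle, `R * length - area below the path` is at most the value
for the straight segment between the ends (`pathCost_le`). As a function of the first interior vertex,
moved along the line of the following edge, this quantity is convex; so that vertex may be moved until
it either reaches the next vertex, or reaches the circle. In the latter case the path splits into two
shorter ones, and the resulting two chords of the circle are compared with the third side of the
triangle they span (`edgeCost_merge`); that comparison is elementary geometry of an obtuse triangle.

Everything is computed in `ℂ` with the circumcentre at the origin.
-/

open MeasureTheory

noncomputable def perim (Ω : Set (EuclideanSpace ℝ (Fin 2))) : ℝ :=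
  (μH[1] (frontier Ω)).toReal

noncomputable def area (Ω : Set (EuclideanSpace ℝ (Fin 2))) : ℝ :=
  (volume Ω).toReal

noncomputable def circumradius (Ω : Set (EuclideanSpace ℝ (Fin 2))) : ℝ :=
  sInf {r : ℝ | 0 ≤ r ∧ ∃ x, Ω ⊆ Metric.closedBall x r}

/-! ### Inscribed polygonal paths in a half disk -/

/-- The cost of the oriented edge from `p` to `q`: `R` times its length minus the signed area between
the edge and the real axis, the latter being positive for an edge which goes to the right in the
upper half plane. -/
noncomputable def edgeCost (R : ℝ) (p q : ℂ) : ℝ :=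
  R * ‖p - q‖ - (q.re - p.re) * (p.im + q.im) / 2

theorem normSq_re_im (z : ℂ) : ‖z‖ ^ 2 = z.re ^ 2 + z.im ^ 2 := by
  rw [← Complex.normSq_eq_norm_sq, Complex.normSq_apply]; ring

theorem sq_le_imp {a b : ℝ} (h : a ^ 2 ≤ b ^ 2) (hb : 0 ≤ b) : a ≤ b := by
  nlinarith [sq_nonneg (a - b), sq_nonneg (a + b)]

/-- For an obtuse triangle with circumradius `R`, area `A` and longest side `w`, replacing the two
other sides by `w` saves at most `A / R` of length. -/
theorem merge_sides {R A u v w : ℝ} (hu : 0 ≤ u) (hv : 0 ≤ v) (hw : 0 ≤ w) (hA : 0 ≤ A)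
    (htri : w ≤ u + v) (hobt : u ^ 2 + v ^ 2 ≤ w ^ 2) (hR : u * v * w = 4 * R * A)
    (hheron : 16 * A ^ 2 = (u + v - w) * (u + v + w) * (w ^ 2 - (u - v) ^ 2)) :
    R * (u + v - w) ≤ A := by
  rcases hA.eq_or_lt with h0 | hpos
  · subst h0
    have h : u * v * w = 0 := by rw [hR]; ring
    have : u + v - w = 0 := by
      rcases mul_eq_zero.1 h with h | h
      · rcases mul_eq_zero.1 h with h | h
        · subst h; nlinarith
        · subst h; nlinarith
      · subst h; nlinarith
    rw [this]; simp
  · have h1 : u * v * w * (u + v - w) ≤ 4 * A ^ 2 := by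
      have : 4 * (u * v * w) ≤ (u + v + w) * (w ^ 2 - (u - v) ^ 2) := by
        have h2 : 2 * (u * v) ≤ w ^ 2 - (u - v) ^ 2 := by nlinarith
        have h3 : 2 * w ≤ u + v + w := by linarith
        have h4 : 0 ≤ u * v := mul_nonneg hu hv
        nlinarith [mul_le_mul h3 h2 (by positivity) (by positivity)]
      nlinarith [mul_le_mul_of_nonneg_left this (sub_nonneg.2 htri)]
    rw [hR] at h1
    have : 4 * A * (R * (u + v - w)) ≤ 4 * A * A := by nlinarith
    exact le_of_mul_le_mul_left this (by positivity)

/-- The formula `uvw = 4RS` relating the sides, the circumradius and the area of a triangle, squared,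
for three points on a circle about the origin. -/
theorem prod_sides_sq {R : ℝ} {p q r : ℂ} (hp : ‖p‖ = R) (hq : ‖q‖ = R) (hr : ‖r‖ = R) :
    (‖p - q‖ * ‖q - r‖ * ‖p - r‖) ^ 2 = (4 * R *
      (((q.re - p.re) * (r.im - p.im) - (q.im - p.im) * (r.re - p.re)) / 2)) ^ 2 := by
  have h1 := normSq_re_im p
  have h2 := normSq_re_im q
  have h3 := normSq_re_im r
  have h4 := normSq_re_im (p - q)
  have h5 := normSq_re_im (q - r)
  have h6 := normSq_re_im (p - r)
  rw [hp] at h1; rw [hq] at h2; rw [hr] at h3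
  simp only [Complex.sub_re, Complex.sub_im] at h4 h5 h6
  rw [mul_pow, mul_pow, h4, h5, h6]
  generalize p.re = a at *
  generalize p.im = b at *
  generalize q.re = c at *
  generalize q.im = d at *
  generalize r.re = e at *
  generalize r.im = f at *
  obtain ⟨S, hS⟩ : ∃ S, R ^ 2 = S := ⟨_, rfl⟩
  obtain ⟨X, hX⟩ : ∃ X, a * c + b * d = X := ⟨_, rfl⟩
  obtain ⟨Y, hY⟩ : ∃ Y, c * e + d * f = Y := ⟨_, rfl⟩
  obtain ⟨Z, hZ⟩ : ∃ Z, a * e + b * f = Z := ⟨_, rfl⟩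
  rw [hS] at h1 h2 h3
  -- The Gram determinant of three vectors in the plane vanishes.
  have hG : S ^ 3 + 2 * X * Y * Z - S * (X ^ 2 + Y ^ 2 + Z ^ 2) = 0 := by
    have : (a ^ 2 + b ^ 2) * (c ^ 2 + d ^ 2) * (e ^ 2 + f ^ 2) + 2 * (a * c + b * d) *
      (c * e + d * f) * (a * e + b * f) - (a ^ 2 + b ^ 2) * (c * e + d * f) ^ 2 -
      (c ^ 2 + d ^ 2) * (a * e + b * f) ^ 2 - (e ^ 2 + f ^ 2) * (a * c + b * d) ^ 2 = 0 := by ring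
    rw [← h1, ← h2, ← h3, hX, hY, hZ] at this
    linear_combination this
  -- The squared cross product is the Gram determinant of the lifts `(1, p), (1, q), (1, r)`.
  have hD : ((c - a) * (f - b) - (d - b) * (e - a)) ^ 2 = (1 + S) ^ 3 +
      2 * (1 + X) * (1 + Y) * (1 + Z) - (1 + S) * ((1 + X) ^ 2 + (1 + Y) ^ 2 + (1 + Z) ^ 2) := by
    have : ((c - a) * (f - b) - (d - b) * (e - a)) ^ 2 =
      (1 + (a ^ 2 + b ^ 2)) * (1 + (c ^ 2 + d ^ 2)) * (1 + (e ^ 2 + f ^ 2)) +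
      2 * (1 + (a * c + b * d)) * (1 + (c * e + d * f)) * (1 + (a * e + b * f)) -
      (1 + (a ^ 2 + b ^ 2)) * (1 + (c * e + d * f)) ^ 2 -
      (1 + (c ^ 2 + d ^ 2)) * (1 + (a * e + b * f)) ^ 2 -
      (1 + (e ^ 2 + f ^ 2)) * (1 + (a * c + b * d)) ^ 2 := by ring
    rw [this, ← h1, ← h2, ← h3, hX, hY, hZ]
    ring
  have e4 : (a - c) ^ 2 + (b - d) ^ 2 = 2 * (S - X) := by linear_combination -h1 - h2 - 2 * hX
  have e5 : (c - e) ^ 2 + (d - f) ^ 2 = 2 * (S - Y) := by linear_combination -h3 - h2 - 2 * hY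
  have e6 : (a - e) ^ 2 + (b - f) ^ 2 = 2 * (S - Z) := by linear_combination -h1 - h3 - 2 * hZ
  have : (4 * R * (((c - a) * (f - b) - (d - b) * (e - a)) / 2)) ^ 2 =
    4 * R ^ 2 * ((c - a) * (f - b) - (d - b) * (e - a)) ^ 2 := by ring
  rw [e4, e5, e6, this, hD, hS]
  linear_combination (-4 - 4 * S) * hG

/-- Leaving out an intermediate vertex on the upper half circle does not decrease the cost. -/
theorem edgeCost_merge {R : ℝ} {p q r : ℂ} (hp : ‖p‖ = R) (hq : ‖q‖ = R) (hr : ‖r‖ = R)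
    (ip : 0 ≤ p.im) (iq : 0 ≤ q.im) (ir : 0 ≤ r.im) (h1 : p.re ≤ q.re) (h2 : q.re ≤ r.re) :
    edgeCost R p q + edgeCost R q r ≤ edgeCost R p r := by
  have hR : 0 ≤ R := hp ▸ norm_nonneg p
  have np := normSq_re_im p
  have nq := normSq_re_im q
  have nr := normSq_re_im r
  rw [hp] at np; rw [hq] at nq; rw [hr] at nr
  rcases (h1.trans h2).eq_or_lt with heq | hlt
  · have hqp : q.re = p.re := by linarith
    have hpq : q = p := by
      apply Complex.ext hqp
      rw [hqp] at nq
      have : q.im ^ 2 = p.im ^ 2 := by linarith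
      exact (pow_left_inj₀ iq ip two_ne_zero).1 this
    subst hpq
    simp [edgeCost]
  set A : ℝ := -(((q.re - p.re) * (r.im - p.im) - (q.im - p.im) * (r.re - p.re)) / 2) with hAdef
  have hA : 0 ≤ A := by
    obtain ⟨l, hl⟩ : ∃ l, l = (q.re - p.re) / (r.re - p.re) := ⟨_, rfl⟩
    have hd : 0 < r.re - p.re := by linarith
    have hl0 : 0 ≤ l := by rw [hl]; apply div_nonneg <;> linarith
    have hl1 : l ≤ 1 := by rw [hl, div_le_one hd]; linarith
    have hle : l * (r.re - p.re) = q.re - p.re := by rw [hl]; field_simp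
    obtain ⟨z, hz⟩ : ∃ z, z = (1 - l) * p.im + l * r.im := ⟨_, rfl⟩
    have hqre : q.re = (1 - l) * p.re + l * r.re := by linarith
    have hzq : z ^ 2 ≤ q.im ^ 2 := by
      have : z ^ 2 + q.re ^ 2 ≤ R ^ 2 := by
        have : R ^ 2 - z ^ 2 - q.re ^ 2 = (1 - l) * l * ((p.re - r.re) ^ 2 + (p.im - r.im) ^ 2) := by
          rw [hz, hqre]; linear_combination (1 - l) * np + l * nr
        have : 0 ≤ (1 - l) * l * ((p.re - r.re) ^ 2 + (p.im - r.im) ^ 2) :=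
          mul_nonneg (mul_nonneg (by linarith) hl0) (by positivity)
        linarith
      linarith
    have hzq' : z ≤ q.im := sq_le_imp hzq iq
    have : A = (r.re - p.re) * (q.im - z) / 2 := by
      rw [hAdef, hz, ← hle]; ring
    rw [this]
    have : 0 ≤ q.im - z := by linarith
    positivity
  have hN : 0 ≤ r.re * p.im - r.im * p.re := by
    rcases le_total 0 p.re with h | h
    · have : r.im ≤ p.im := by
        apply sq_le_imp _ ip
        nlinarith
      nlinarith
    · rcases le_total 0 r.re with h' | h'
      · nlinarith
      · have : p.im ≤ r.im := by
          apply sq_le_imp _ ir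
          nlinarith
        nlinarith
  have n4 := normSq_re_im (p - q)
  have n5 := normSq_re_im (q - r)
  have n6 := normSq_re_im (p - r)
  simp only [Complex.sub_re, Complex.sub_im] at n4 n5 n6
  have hw : 0 < ‖p - r‖ := by
    rw [norm_pos_iff, sub_ne_zero]; rintro rfl; exact lt_irrefl _ hlt
  -- The inscribed angle at `q` is obtuse, the centre and `q` lying on opposite sides of `pr`.
  have hob : ‖p - r‖ ^ 2 * ((p.re - q.re) * (r.re - q.re) + (p.im - q.im) * (r.im - q.im)) =
      -(4 * A * (r.re * p.im - r.im * p.re)) := by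
    have n6' : ‖p - r‖ ^ 2 = 2 * (R ^ 2 - (p.re * r.re + p.im * r.im)) := by
      linear_combination n6 - np - nr
    have key : 2 * A * (r.re * p.im - r.im * p.re) =
      ((p.re ^ 2 + p.im ^ 2) * (r.re * q.re + r.im * q.im) + (p.re * r.re + p.im * r.im) ^ 2
       + (p.re * q.re + p.im * q.im) * (r.re ^ 2 + r.im ^ 2)
       - (p.re * r.re + p.im * r.im) * (p.re * q.re + p.im * q.im)
       - (p.re * r.re + p.im * r.im) * (r.re * q.re + r.im * q.im)
       - (p.re ^ 2 + p.im ^ 2) * (r.re ^ 2 + r.im ^ 2)) := by rw [hAdef]; ring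
    rw [← np, ← nr] at key
    rw [n6']
    have e : (p.re - q.re) * (r.re - q.re) + (p.im - q.im) * (r.im - q.im) =
      (p.re * r.re + p.im * r.im) - (p.re * q.re + p.im * q.im) - (r.re * q.re + r.im * q.im)
        + R ^ 2 := by linear_combination -nq
    rw [e]
    linear_combination 2 * key
  have hob' : (p.re - q.re) * (r.re - q.re) + (p.im - q.im) * (r.im - q.im) ≤ 0 := by
    have h := mul_nonneg hA hN
    by_contra hcon
    push Not at hcon
    have := mul_pos (pow_pos hw 2) hcon
    linarith
  have hprod : ‖p - q‖ * ‖q - r‖ * ‖p - r‖ = 4 * R * A := by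
    have h := prod_sides_sq hp hq hr
    refine (pow_left_inj₀ (by positivity) (by positivity) two_ne_zero).1 (h.trans ?_)
    rw [hAdef]; ring
  have hher : 16 * A ^ 2 = (‖p - q‖ + ‖q - r‖ - ‖p - r‖) * (‖p - q‖ + ‖q - r‖ + ‖p - r‖) *
      (‖p - r‖ ^ 2 - (‖p - q‖ - ‖q - r‖) ^ 2) := by
    have : (‖p - q‖ + ‖q - r‖ - ‖p - r‖) * (‖p - q‖ + ‖q - r‖ + ‖p - r‖) *
      (‖p - r‖ ^ 2 - (‖p - q‖ - ‖q - r‖) ^ 2) = 4 * (‖p - q‖ ^ 2 * ‖q - r‖ ^ 2) -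
        (‖p - r‖ ^ 2 - ‖p - q‖ ^ 2 - ‖q - r‖ ^ 2) ^ 2 := by ring
    rw [this, n4, n5, n6, hAdef]; ring
  have htri : ‖p - r‖ ≤ ‖p - q‖ + ‖q - r‖ := norm_sub_le_norm_sub_add_norm_sub p q r
  have := merge_sides (norm_nonneg _) (norm_nonneg _) (norm_nonneg _) hA htri
    (by nlinarith) hprod hher
  have e : edgeCost R p q + edgeCost R q r - edgeCost R p r =
    R * (‖p - q‖ + ‖q - r‖ - ‖p - r‖) - A := by
    rw [hAdef]; unfold edgeCost; ring
  linarith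

/-- The sum of the edge costs along the polygonal path through `p` and the points of the list. -/
noncomputable def pathCost (R : ℝ) : ℂ → List ℂ → ℝ
  | _, [] => 0
  | p, q :: l => edgeCost R p q + pathCost R q l

/-- Consecutive edges of the polygonal path never turn left. -/
def RightTurns : List ℂ → Prop
  | a :: b :: c :: l =>
    (b.re - a.re) * (c.im - b.im) ≤ (b.im - a.im) * (c.re - b.re) ∧ RightTurns (b :: c :: l)
  | _ => True

theorem RightTurns.tail {a : ℂ} {l : List ℂ} (h : RightTurns (a :: l)) : RightTurns l := by
  match l, h with
  | [], _ => trivial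
  | [_], _ => trivial
  | _ :: _ :: _, h => exact h.2

/-- A ray leaving `b` through a point `a ≠ b` of the disk meets the circle at or behind `a`. -/
theorem exists_ray_sphere {R : ℝ} {a b : ℂ} (hab : a ≠ b) (ha : ‖a‖ ≤ R) :
    ∃ t : ℝ, 1 ≤ t ∧ ‖b + t * (a - b)‖ = R := by
  have hpos : 0 < ‖a - b‖ := norm_pos_iff.2 (sub_ne_zero.2 hab)
  set T : ℝ := 1 + (R + ‖b‖) / ‖a - b‖ with hT
  have hR : 0 ≤ R := (norm_nonneg a).trans ha
  have hT1 : 1 ≤ T := by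
    have : 0 ≤ (R + ‖b‖) / ‖a - b‖ := by positivity
    linarith
  have hcont : ContinuousOn (fun t : ℝ => ‖b + t * (a - b)‖) (Set.Icc 1 T) := by fun_prop
  have := intermediate_value_Icc hT1 hcont
  have hmem : R ∈ Set.Icc ‖b + ((1 : ℝ) : ℂ) * (a - b)‖ ‖b + (T : ℂ) * (a - b)‖ := by
    constructor
    · simpa using ha
    · have h1 : ‖(T : ℂ) * (a - b)‖ = ‖a - b‖ + (R + ‖b‖) := by
        rw [norm_mul, Complex.norm_real, Real.norm_eq_abs, abs_of_nonneg (by linarith), hT]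
        field_simp
      have h2 : ‖(T : ℂ) * (a - b)‖ ≤ ‖b + (T : ℂ) * (a - b)‖ + ‖b‖ := by
        have := norm_sub_le (b + (T : ℂ) * (a - b)) b
        simpa using this
      linarith
  obtain ⟨t, ht, h⟩ := this hmem
  exact ⟨t, ht.1, h⟩

/-- Let the path turn right at `a` on its way from `p` to `b`, where `p` is on the upper half circle,
and let `z` be where the line from `b` to `a`, continued beyond `a`, meets the circle. Then `z` is on
the upper half circle too, and not to the left of `p`. -/
theorem ray_point {R t : ℝ} {p a b z : ℂ} (ip : 0 ≤ p.im) (ia : 0 ≤ a.im) (ht1 : 1 ≤ t)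
    (hpa : p.re < a.re) (hab : a.re < b.re)
    (hturn : (a.re - p.re) * (b.im - a.im) ≤ (a.im - p.im) * (b.re - a.re))
    (zre : z.re = b.re + t * (a.re - b.re)) (zim : z.im = b.im + t * (a.im - b.im))
    (np : R ^ 2 = p.re ^ 2 + p.im ^ 2) (nz : R ^ 2 = z.re ^ 2 + z.im ^ 2)
    (na' : a.re ^ 2 + a.im ^ 2 ≤ R ^ 2) : p.re ≤ z.re ∧ 0 ≤ z.im := by
  -- If `z` were to the left of `p`, the line would cross the vertical through `p` strictly inside the
  -- disk; the right turn at `a` makes it cross at or above `p`, which is on the circle.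
  have zp : p.re ≤ z.re := by
    by_contra hcon
    push Not at hcon
    have hza : z.re < a.re := by linarith
    obtain ⟨k, hk⟩ : ∃ k, k = (a.re - p.re) / (a.re - z.re) := ⟨_, rfl⟩
    have hd : 0 < a.re - z.re := by linarith
    have hk0 : 0 < k := by rw [hk]; apply div_pos <;> linarith
    have hk1 : k < 1 := by rw [hk, div_lt_one hd]; linarith
    have hke : k * (a.re - z.re) = a.re - p.re := by rw [hk]; field_simp
    obtain ⟨y, hy⟩ : ∃ y, y = (1 - k) * a.im + k * z.im := ⟨_, rfl⟩
    have hpre : p.re = (1 - k) * a.re + k * z.re := by linarith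
    have hlt : p.re ^ 2 + y ^ 2 < R ^ 2 := by
      have h1 : (1 - k) * R ^ 2 + k * R ^ 2 - p.re ^ 2 - y ^ 2 ≥
          (1 - k) * k * ((a.re - z.re) ^ 2 + (a.im - z.im) ^ 2) := by
        have e := mul_nonneg (by linarith : 0 ≤ 1 - k) (sub_nonneg.2 na')
        rw [hy, hpre]
        linear_combination e - k * nz
      have h2 : 0 < (1 - k) * k * ((a.re - z.re) ^ 2 + (a.im - z.im) ^ 2) := by
        have : 0 < 1 - k := by linarith
        have : 0 < (a.re - z.re) ^ 2 := by positivity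
        positivity
      linarith
    have hyp : p.im ≤ y := by
      have e1 : (b.re - a.re) * y = (b.re - a.re) * a.im + (b.im - a.im) * (p.re - a.re) := by
        have : z.re - a.re = (t - 1) * (a.re - b.re) := by rw [zre]; ring
        have h3 : z.im - a.im = (t - 1) * (a.im - b.im) := by rw [zim]; ring
        have : y = a.im + k * (z.im - a.im) := by rw [hy]; ring
        have h4 : p.re - a.re = k * (z.re - a.re) := by linarith
        rw [this, h4, h3, zre]; ring
      have : (b.re - a.re) * p.im ≤ (b.re - a.re) * y := by rw [e1]; linarith
      exact le_of_mul_le_mul_left this (by linarith)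
    nlinarith
  have za : z.re ≤ a.re := by nlinarith
  have iz : 0 ≤ z.im := by
    -- `z` lies on or above the segment `pa`.
    have e1 : (b.re - a.re) * z.im = (b.re - a.re) * a.im + (b.im - a.im) * (z.re - a.re) := by
      rw [zre, zim]; ring
    have hpb : (a.re - p.re) * ((b.re - a.re) * z.im) ≥
        (b.re - a.re) * (p.im * (a.re - z.re) + a.im * (z.re - p.re)) := by
      rw [e1]
      nlinarith [mul_le_mul_of_nonneg_right hturn (sub_nonneg.2 za)]
    have h0 : 0 ≤ (b.re - a.re) * (p.im * (a.re - z.re) + a.im * (z.re - p.re)) :=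
      mul_nonneg (by linarith) (add_nonneg (mul_nonneg ip (by linarith))
        (mul_nonneg ia (by linarith)))
    have h1 : 0 < (a.re - p.re) * (b.re - a.re) := mul_pos (by linarith) (by linarith)
    have h2 : 0 ≤ (a.re - p.re) * (b.re - a.re) * z.im := by linarith
    exact nonneg_of_mul_nonneg_right h2 h1
  exact ⟨zp, iz⟩

/-- Among the right-turning paths in the upper half disk from `p` to `e`, both on the circle, the
single edge has the greatest cost. By induction on the number of vertices: the first interior vertex
`a` is a convex combination of the next vertex `b` and the point `z` where the line from `b` through
`a` leaves the disk, and the cost is convex in `a` along that line. Moving `a` to `b` drops a vertex;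
moving it to `z` gives the edge `pz` followed by a shorter path that starts on the circle, and
`edgeCost_merge` applies once that path is replaced by a single edge. -/
theorem pathCost_le {R : ℝ} {e : ℂ} (he : ‖e‖ = R) (ie : 0 ≤ e.im) :
    ∀ (l : List ℂ) (p : ℂ), ‖p‖ = R → 0 ≤ p.im → (∀ q ∈ l, ‖q‖ ≤ R ∧ 0 ≤ q.im) →
      List.IsChain (fun a b : ℂ => a.re < b.re) (p :: (l ++ [e])) →
      RightTurns (p :: (l ++ [e])) → pathCost R p (l ++ [e]) ≤ edgeCost R p e := by
  have hR : 0 ≤ R := he ▸ norm_nonneg e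
  intro l
  induction l with
  | nil => intro p _ _ _ _ _; simp [pathCost]
  | cons a l ih =>
    intro p hp ip hl hch hrt
    obtain ⟨b, m, hbm⟩ : ∃ b m, l ++ [e] = b :: m := by
      cases l with
      | nil => exact ⟨_, _, rfl⟩
      | cons x y => exact ⟨_, _, rfl⟩
    have ha := hl a (by simp)
    have hl' : ∀ q ∈ l, ‖q‖ ≤ R ∧ 0 ≤ q.im := fun q hq => hl q (by simp [hq])
    rw [List.cons_append, hbm] at hch hrt ⊢
    rw [hbm] at ih
    have hpa : p.re < a.re := by
      have := hch; simp only [List.isChain_cons_cons] at this; exact this.1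
    have hab : a.re < b.re := by
      have := hch; simp only [List.isChain_cons_cons] at this; exact this.2.1
    have hbch : List.IsChain (fun a b : ℂ => a.re < b.re) (b :: m) := hch.tail.tail
    have hbe : b.re ≤ e.re := by
      have hp' := List.isChain_iff_pairwise.1 hbch
      have he' : e ∈ b :: m := by rw [← hbm]; simp
      rcases List.mem_cons.1 he' with h | h
      · rw [h]
      · exact ((List.pairwise_cons.1 hp').1 e h).le
    have hturn := hrt.1
    have hrta : RightTurns (a :: b :: m) := hrt.2
    have hba : a ≠ b := by rintro rfl; exact lt_irrefl _ hab
    obtain ⟨t, ht1, htR⟩ := exists_ray_sphere hba ha.1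
    obtain ⟨z, hz⟩ : ∃ z, z = b + (t : ℂ) * (a - b) := ⟨_, rfl⟩
    rw [← hz] at htR
    have zre : z.re = b.re + t * (a.re - b.re) := by rw [hz]; simp
    have zim : z.im = b.im + t * (a.im - b.im) := by rw [hz]; simp
    have np := normSq_re_im p
    have nz := normSq_re_im z
    have na := normSq_re_im a
    rw [hp] at np
    rw [htR] at nz
    have na' : a.re ^ 2 + a.im ^ 2 ≤ R ^ 2 := by
      rw [← na]; exact pow_le_pow_left₀ (norm_nonneg _) ha.1 2
    have zb : z.re < b.re := by nlinarith
    obtain ⟨zp, iz⟩ := ray_point ip ha.2 ht1 hpa hab hturn zre zim np nz na'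
    have hp1 := ih p hp ip hl' (List.isChain_cons_cons.2 ⟨hpa.trans hab, hbch⟩) (by
      match m, hrta with
      | [], _ => trivial
      | c :: m, hr =>
        have hbc : b.re < c.re := (List.isChain_cons_cons.1 hbch).1
        refine ⟨?_, hr.2⟩
        have h1 := hr.1
        have h3 : (a.re - p.re) * ((b.re - a.re) * (c.im - b.im)) ≤
          (a.re - p.re) * ((b.im - a.im) * (c.re - b.re)) :=
            mul_le_mul_of_nonneg_left h1 (by linarith)
        have h4 := mul_le_mul_of_nonneg_right hturn (sub_nonneg.2 hbc.le)
        have h5 : (b.re - a.re) * ((a.re - p.re) * (c.im - b.im)) ≤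
          (b.re - a.re) * ((a.im - p.im) * (c.re - b.re)) := by linarith
        have h6 := le_of_mul_le_mul_left h5 (by linarith)
        linarith)
    have hz1 := ih z htR iz hl' (List.isChain_cons_cons.2 ⟨zb, hbch⟩) (by
      match m, hrta with
      | [], _ => trivial
      | c :: m, hr =>
        refine ⟨?_, hr.2⟩
        have h1 := hr.1
        have h3 := mul_le_mul_of_nonneg_left h1 (by linarith : (0:ℝ) ≤ t)
        rw [zre, zim]
        linarith)
    have hmerge := edgeCost_merge hp htR he ip iz ie zp (zb.le.trans hbe)
    -- The cost of the first two edges is convex in `a` along the line through `b`.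
    have hconv : t * (edgeCost R p a + edgeCost R a b) ≤ (t - 1) * edgeCost R p b +
        (edgeCost R p z + edgeCost R z b) := by
      have n1 : t * ‖p - a‖ ≤ (t - 1) * ‖p - b‖ + ‖p - z‖ := by
        have : (t : ℂ) * (p - a) = ((t - 1 : ℝ) : ℂ) * (p - b) + (p - z) := by
          rw [hz]; push_cast; ring
        have h2 := norm_add_le (((t - 1 : ℝ) : ℂ) * (p - b)) (p - z)
        rw [← this, norm_mul, norm_mul, Complex.norm_real, Complex.norm_real, Real.norm_eq_abs,
          Real.norm_eq_abs, abs_of_nonneg (by linarith), abs_of_nonneg (by linarith)] at h2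
        exact h2
      have n2 : t * ‖a - b‖ = ‖z - b‖ := by
        have : z - b = (t : ℂ) * (a - b) := by rw [hz]; ring
        rw [this, norm_mul, Complex.norm_real, Real.norm_eq_abs, abs_of_nonneg (by linarith)]
      have := mul_le_mul_of_nonneg_left n1 hR
      unfold edgeCost
      rw [← n2, zre, zim]
      linarith
    simp only [pathCost] at hp1 hz1 ⊢
    have : t * (edgeCost R p a + (edgeCost R a b + pathCost R b m)) ≤ t * edgeCost R p e := by
      nlinarith
    exact le_of_mul_le_mul_left this (by linarith)

/-! ### The length of a concave graph in a disk -/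

/-- The one-dimensional Hausdorff measure of a curve is at most its variation: the curve is a
1-Lipschitz image of the range of its arc length. Continuity is not needed. -/
lemma hausdorff_image_le_of_variation {γ : ℝ → ℂ} {c V : ℝ} (hc : 0 < c)
    (hV : eVariationOn γ (Set.Icc (-c) c) ≤ ENNReal.ofReal V) :
    μH[1] (γ '' Set.Icc (-c) c) ≤ ENNReal.ofReal V := by
  set s := Set.Icc (-c) c with hs
  have hm : -c ∈ s := ⟨le_rfl, by linarith⟩
  have hfin : BoundedVariationOn γ s := fun h => by simp [h] at hV
  have hloc := hfin.locallyBoundedVariationOn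
  set φ := variationOnFromTo γ s (-c) with hφ
  have key : ∀ x ∈ s, ∀ y ∈ s, x ≤ y → edist (γ x) (γ y) ≤ edist (φ x) (φ y) := by
    intro x hx y hy hxy
    have h1 := variationOnFromTo.add hloc hm hx hy
    have h2 := variationOnFromTo.eq_of_le γ s hxy
    have h3 : edist (γ x) (γ y) ≤ eVariationOn γ (s ∩ Set.Icc x y) :=
      eVariationOn.edist_le _ ⟨hx, le_rfl, hxy⟩ ⟨hy, hxy, le_rfl⟩
    refine h3.trans ?_
    rw [edist_comm, edist_dist, Real.dist_eq, hφ, ← h1, add_sub_cancel_left, h2,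
      abs_of_nonneg ENNReal.toReal_nonneg, ENNReal.ofReal_toReal (hloc x y hx hy)]
  have key2 : ∀ x ∈ s, ∀ y ∈ s, edist (γ x) (γ y) ≤ edist (φ x) (φ y) := by
    intro x hx y hy
    rcases le_total x y with h | h
    · exact key x hx y hy h
    · rw [edist_comm, edist_comm (φ x)]; exact key y hy x hx h
  let ψ : ℝ → ℝ := Function.invFunOn φ s
  have hψ : ∀ v ∈ φ '' s, ψ v ∈ s ∧ φ (ψ v) = v := fun v hv =>
    ⟨Function.invFunOn_mem hv, Function.invFunOn_eq hv⟩
  have hlip : LipschitzOnWith 1 (γ ∘ ψ) (φ '' s) := by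
    intro v hv w hw
    have := key2 _ (hψ v hv).1 _ (hψ w hw).1
    rw [(hψ v hv).2, (hψ w hw).2] at this
    simpa using this
  have himg : γ '' s ⊆ (γ ∘ ψ) '' (φ '' s) := by
    rintro _ ⟨x, hx, rfl⟩
    refine ⟨φ x, ⟨x, hx, rfl⟩, ?_⟩
    have hx' := hψ (φ x) ⟨x, hx, rfl⟩
    have := key2 _ hx'.1 x hx
    rw [hx'.2, edist_self] at this
    exact edist_eq_zero.1 (le_antisymm this zero_le)
  have hsub : φ '' s ⊆ Set.Icc 0 (eVariationOn γ s).toReal := by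
    rintro _ ⟨x, hx, rfl⟩
    rw [hφ, variationOnFromTo.eq_of_le γ s hx.1]
    exact ⟨ENNReal.toReal_nonneg,
      ENNReal.toReal_mono hfin (eVariationOn.mono _ Set.inter_subset_left)⟩
  calc μH[1] (γ '' s) ≤ μH[1] ((γ ∘ ψ) '' (φ '' s)) := measure_mono himg
    _ ≤ μH[1] (φ '' s) := by
      simpa using hlip.hausdorffMeasure_image_le (d := 1) zero_le_one
    _ ≤ μH[1] (Set.Icc 0 (eVariationOn γ s).toReal) := measure_mono hsub
    _ = eVariationOn γ s := by
      rw [hausdorffMeasure_real, Real.volume_Icc, sub_zero, ENNReal.ofReal_toReal hfin]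
    _ ≤ _ := hV

/-- Length of the polygon with vertices `g x, g y₁, g y₂, …`, where `l = [y₁, y₂, …]`. -/
noncomputable def glen (g : ℝ → ℂ) : ℝ → List ℝ → ℝ
  | _, [] => 0
  | x, y :: l => ‖g x - g y‖ + glen g y l

/-- The graph of `f` in the complex plane. -/
def graphMap (f : ℝ → ℝ) (x : ℝ) : ℂ := ⟨x, f x⟩

lemma glen_append (g : ℝ → ℂ) (l : List ℝ) : ∀ (x y : ℝ),
    glen g x (l ++ [y]) = glen g x l + ‖g ((x :: l).getLast (by simp)) - g y‖ := by
  induction l with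
  | nil => intro x y; simp [glen]
  | cons a l ih =>
    intro x y
    simp only [List.cons_append, glen, ih]
    rw [List.getLast_cons (a := x) (List.cons_ne_nil a l)]
    ring

lemma isChain_append_last {l : List ℝ} : ∀ {x y : ℝ}, List.IsChain (· < ·) (x :: l) →
    (x :: l).getLast (by simp) < y → List.IsChain (· < ·) (x :: (l ++ [y])) := by
  induction l with
  | nil => intro x y _ h; simpa using h
  | cons a l ih =>
    intro x y h hl
    rw [List.isChain_cons_cons] at h
    rw [List.cons_append, List.isChain_cons_cons]
    rw [List.getLast_cons (by simp)] at hl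
    exact ⟨h.1, ih h.2 hl⟩

/-- The hypothesis says that `F y - F x` dominates the area of the trapezoid under the chord of the
graph over `[x, y]`. -/
lemma glen_le_pathCost {f F : ℝ → ℝ} {R c : ℝ}
    (htrap : ∀ x ∈ Set.Icc (-c) c, ∀ y ∈ Set.Icc (-c) c, x < y →
      (y - x) * (f x + f y) / 2 ≤ F y - F x) (l : List ℝ) :
    ∀ x ∈ Set.Icc (-c) c, (∀ y ∈ l, y ∈ Set.Icc (-c) c) → List.IsChain (· < ·) (x :: l) →
    R * glen (graphMap f) x l ≤ pathCost R (graphMap f x) (l.map (graphMap f)) +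
      (F ((x :: l).getLast (by simp)) - F x) := by
  induction l with
  | nil => intro x hx _ _; simp [glen, pathCost]
  | cons a l ih =>
    intro x hx hl hch
    rw [List.isChain_cons_cons] at hch
    have ha := hl a (by simp)
    have h1 := ih a ha (fun y hy => hl y (by simp [hy])) hch.2
    have h2 := htrap x hx a ha hch.1
    simp only [glen, List.map_cons, pathCost, edgeCost]
    rw [List.getLast_cons (by simp)]
    simp only [graphMap] at h1 ⊢
    linarith

lemma rightTurns_graph {f : ℝ → ℝ} {c : ℝ} (hf : ConcaveOn ℝ (Set.Icc (-c) c) f) :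
    ∀ (l : List ℝ), (∀ y ∈ l, y ∈ Set.Icc (-c) c) → List.IsChain (· < ·) l →
    RightTurns (l.map (graphMap f))
  | [], _, _ => trivial
  | [_], _, _ => trivial
  | [_, _], _, _ => trivial
  | x :: y :: z :: l, hl, hch => by
    rw [List.isChain_cons_cons] at hch
    refine ⟨?_, rightTurns_graph hf (y :: z :: l) (fun w hw => hl w (by simp [hw])) hch.2⟩
    have hyz := (List.isChain_cons_cons.1 hch.2).1
    have := hf.slope_anti_adjacent (hl x (by simp)) (hl z (by simp)) hch.1 hyz
    rw [div_le_div_iff₀ (by linarith [hch.1]) (by linarith)] at this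
    simp only [graphMap]
    linarith

/-- The sums in the definition of the variation of `g` are bounded by lengths of polygons whose
parameters increase strictly, starting from `-c`. -/
lemma exists_chain_of_monotone (g : ℝ → ℂ) {c : ℝ} (u : ℕ → ℝ) (hu : Monotone u)
    (huc : ∀ i, u i ∈ Set.Icc (-c) c) (n : ℕ) :
    ∃ l : List ℝ, List.IsChain (· < ·) (-c :: l) ∧ (∀ y ∈ l, y ∈ Set.Icc (-c) c) ∧
      (-c :: l).getLast (by simp) = u n ∧
      ∑ i ∈ Finset.range n, ‖g (u (i + 1)) - g (u i)‖ ≤ glen g (-c) l := by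
  induction n with
  | zero =>
    rcases (huc 0).1.eq_or_lt with h | h
    · exact ⟨[], by simp, by simp, by simpa using h, by simp [glen]⟩
    · exact ⟨[u 0], by simpa using h, by simpa using huc 0, by simp, by simp [glen]⟩
  | succ n ih =>
    obtain ⟨l, h1, h2, h3, h4⟩ := ih
    rcases (hu (Nat.le_succ n)).eq_or_lt with h | h
    · refine ⟨l, h1, h2, h3.trans h, ?_⟩
      rw [Finset.sum_range_succ, ← Nat.succ_eq_add_one n, ← h]
      simpa using h4
    · refine ⟨l ++ [u (n + 1)], isChain_append_last h1 (h3 ▸ h), ?_, by simp, ?_⟩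
      · intro y hy
        rcases List.mem_append.1 hy with hy | hy
        · exact h2 y hy
        · rw [List.mem_singleton.1 hy]; exact huc _
      · rw [glen_append, h3, Finset.sum_range_succ, norm_sub_rev (g (u n))]
        linarith

/-- The bound on the length of polygons inscribed in a concave graph over a chord of the circle: the
graph runs inside the disk from `(-c, d)` to `(c, d)`, and `F` is an upper estimate for the area
below it. -/
lemma sum_le_of_graph {f F : ℝ → ℝ} {R c d : ℝ} (hc : 0 < c) (hR : 0 < R)
    (hcd : c ^ 2 + d ^ 2 = R ^ 2)
    (hf : ConcaveOn ℝ (Set.Icc (-c) c) f) (hf1 : f (-c) = d) (hf2 : f c = d)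
    (hf0 : ∀ x ∈ Set.Icc (-c) c, 0 ≤ f x) (hfR : ∀ x ∈ Set.Icc (-c) c, x ^ 2 + f x ^ 2 ≤ R ^ 2)
    (htrap : ∀ x ∈ Set.Icc (-c) c, ∀ y ∈ Set.Icc (-c) c, x < y →
      (y - x) * (f x + f y) / 2 ≤ F y - F x)
    (u : ℕ → ℝ) (hu : Monotone u) (huc : ∀ i, u i ∈ Set.Icc (-c) c) (n : ℕ) :
    R * ∑ i ∈ Finset.range n, ‖graphMap f (u (i + 1)) - graphMap f (u i)‖ ≤
      2 * c * R - 2 * c * d + (F c - F (-c)) := by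
  -- Extend the sequence so that it ends in `c`.
  let u' : ℕ → ℝ := fun i => if i ≤ n then u i else c
  have hu' : Monotone u' := by
    intro i j hij
    simp only [u']
    split_ifs with h1 h2 h2
    · exact hu hij
    · exact (huc i).2
    · omega
    · exact le_rfl
  have huc' : ∀ i, u' i ∈ Set.Icc (-c) c := by
    intro i
    simp only [u']
    split_ifs
    · exact huc i
    · exact ⟨by linarith, le_rfl⟩
  obtain ⟨l, h1, h2, h3, h4⟩ := exists_chain_of_monotone (graphMap f) u' hu' huc' (n + 1)
  have hlast : u' (n + 1) = c := by simp [u']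
  rw [hlast] at h3
  have hmc : -c ∈ Set.Icc (-c) c := ⟨le_rfl, by linarith⟩
  have hmc' : c ∈ Set.Icc (-c) c := ⟨by linarith, le_rfl⟩
  have hsum : ∑ i ∈ Finset.range n, ‖graphMap f (u (i + 1)) - graphMap f (u i)‖ ≤
      glen (graphMap f) (-c) l := by
    refine le_trans ?_ h4
    rw [Finset.sum_range_succ]
    have : ∑ i ∈ Finset.range n, ‖graphMap f (u (i + 1)) - graphMap f (u i)‖ =
        ∑ i ∈ Finset.range n, ‖graphMap f (u' (i + 1)) - graphMap f (u' i)‖ := by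
      refine Finset.sum_congr rfl fun i hi => ?_
      have := Finset.mem_range.1 hi
      simp only [u']
      rw [if_pos (by omega), if_pos (by omega)]
    rw [this]
    exact le_add_of_nonneg_right (norm_nonneg _)
  have hg := glen_le_pathCost (R := R) htrap l (-c) hmc h2 h1
  rw [h3] at hg
  -- `l` ends in `c`, and so has the shape required by `pathCost_le`.
  obtain ⟨m, rfl⟩ : ∃ m, l = m ++ [c] := by
    rcases List.eq_nil_or_concat l with rfl | ⟨m, b, rfl⟩
    · simp at h3; linarith
    · refine ⟨m, ?_⟩
      simp only [List.concat_eq_append] at h3 ⊢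
      have h5 : b = c := by simpa using h3
      rw [h5]
  have nsq : ∀ x ∈ Set.Icc (-c) c, ‖graphMap f x‖ ^ 2 = x ^ 2 + f x ^ 2 := fun x _ =>
    normSq_re_im _
  have hnle : ∀ x ∈ Set.Icc (-c) c, ‖graphMap f x‖ ≤ R := fun x hx =>
    le_of_sq_le_sq (by rw [nsq x hx]; exact hfR x hx) hR.le
  have hnc : ‖graphMap f c‖ = R := by
    rw [← sq_eq_sq₀ (norm_nonneg _) hR.le, nsq c hmc', hf2, hcd]
  have hnmc : ‖graphMap f (-c)‖ = R := by
    rw [← sq_eq_sq₀ (norm_nonneg _) hR.le, nsq _ hmc, hf1, ← hcd]; ring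
  have hp := pathCost_le hnc (hf0 c hmc') (m.map (graphMap f)) (graphMap f (-c)) hnmc
    (hf0 _ hmc) (by
      intro q hq
      obtain ⟨x, hx, rfl⟩ := List.mem_map.1 hq
      have hx' := h2 x (by simp [hx])
      exact ⟨hnle x hx', hf0 x hx'⟩)
    (by
      have : graphMap f (-c) :: (m.map (graphMap f) ++ [graphMap f c]) =
        (-c :: (m ++ [c])).map (graphMap f) := by simp
      rw [this, List.isChain_map]
      exact h1)
    (by
      have : graphMap f (-c) :: (m.map (graphMap f) ++ [graphMap f c]) =
        (-c :: (m ++ [c])).map (graphMap f) := by simp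
      rw [this]
      refine rightTurns_graph hf _ ?_ h1
      intro y hy
      rcases List.mem_cons.1 hy with rfl | hy
      · exact hmc
      · exact h2 y hy)
  have hedge : edgeCost R (graphMap f (-c)) (graphMap f c) = 2 * c * R - 2 * c * d := by
    have : graphMap f (-c) - graphMap f c = ((-(2 * c) : ℝ) : ℂ) := by
      apply Complex.ext <;> simp [graphMap, hf1, hf2]; ring
    unfold edgeCost
    rw [this, Complex.norm_real, Real.norm_eq_abs, abs_neg, abs_of_pos (by linarith)]
    simp only [graphMap, hf1, hf2]
    ring
  rw [hedge] at hp
  rw [List.map_append, List.map_cons, List.map_nil] at hg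
  have := mul_le_mul_of_nonneg_left hsum hR.le
  linarith

lemma eVariationOn_graph_le {f F : ℝ → ℝ} {R c d : ℝ} (hc : 0 < c) (hR : 0 < R)
    (hcd : c ^ 2 + d ^ 2 = R ^ 2)
    (hf : ConcaveOn ℝ (Set.Icc (-c) c) f) (hf1 : f (-c) = d) (hf2 : f c = d)
    (hf0 : ∀ x ∈ Set.Icc (-c) c, 0 ≤ f x) (hfR : ∀ x ∈ Set.Icc (-c) c, x ^ 2 + f x ^ 2 ≤ R ^ 2)
    (htrap : ∀ x ∈ Set.Icc (-c) c, ∀ y ∈ Set.Icc (-c) c, x < y →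
      (y - x) * (f x + f y) / 2 ≤ F y - F x) :
    eVariationOn (graphMap f) (Set.Icc (-c) c) ≤
      ENNReal.ofReal ((2 * c * R - 2 * c * d + (F c - F (-c))) / R) := by
  refine iSup_le ?_
  rintro ⟨n, u, hu, huc⟩
  have h := sum_le_of_graph hc hR hcd hf hf1 hf2 hf0 hfR htrap u hu huc n
  have : ∑ i ∈ Finset.range n, edist (graphMap f (u (i + 1))) (graphMap f (u i)) =
      ENNReal.ofReal (∑ i ∈ Finset.range n, ‖graphMap f (u (i + 1)) - graphMap f (u i)‖) := by
    rw [ENNReal.ofReal_sum_of_nonneg (fun _ _ => norm_nonneg _)]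
    refine Finset.sum_congr rfl fun i _ => ?_
    rw [edist_dist, dist_eq_norm]
  dsimp only
  rw [this]
  refine ENNReal.ofReal_le_ofReal ?_
  rw [le_div_iff₀ hR]
  linarith

/-! ### Caps -/

lemma Convex.mk_mem {K : Set ℂ} (hK : Convex ℝ K) {p q : ℂ} (hp : p ∈ K) (hq : q ∈ K) {s : ℝ}
    (h0 : 0 ≤ s) (h1 : s ≤ 1) {z : ℂ} (hre : z.re = p.re + s * (q.re - p.re))
    (him : z.im = p.im + s * (q.im - p.im)) : z ∈ K := by
  have := hK hp hq (sub_nonneg.2 h1) h0 (by ring)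
  convert this using 1
  apply Complex.ext
  · rw [hre]; simp; ring
  · rw [him]; simp; ring

/-- A compact set has a highest point on every vertical line that meets it. -/
lemma exists_top {K : Set ℂ} (hK : IsCompact K) {x d : ℝ} (h : (⟨x, d⟩ : ℂ) ∈ K) :
    ∃ y, (⟨x, y⟩ : ℂ) ∈ K ∧ ∀ z, (⟨x, z⟩ : ℂ) ∈ K → z ≤ y := by
  have hcl : IsClosed {p : ℂ | p.re = x} := isClosed_eq Complex.continuous_re continuous_const
  obtain ⟨p, hp, hmax⟩ := (hK.inter_right hcl).exists_isMaxOn ⟨⟨x, d⟩, h, rfl⟩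
    Complex.continuous_im.continuousOn
  refine ⟨p.im, ?_, fun z hz => hmax ⟨hz, rfl⟩⟩
  have : (⟨x, p.im⟩ : ℂ) = p := Complex.ext hp.2.symm rfl
  rw [this]; exact hp.1

/-- The piece of `K` above height `d` and over `(x, y]` has at least the area of the trapezoid
inscribed in it. -/
lemma trapezoid_le {K : Set ℂ} (hK : Convex ℝ K) {d x y fx fy : ℝ} (hxy : x < y)
    (h1 : (⟨x, d⟩ : ℂ) ∈ K) (h2 : (⟨y, d⟩ : ℂ) ∈ K) (h3 : (⟨x, fx⟩ : ℂ) ∈ K)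
    (h4 : (⟨y, fy⟩ : ℂ) ∈ K) (hx : d ≤ fx) (hy : d ≤ fy) :
    ENNReal.ofReal ((y - x) * (fx + fy - 2 * d) / 2) ≤
      volume (K ∩ {p | d < p.im} ∩ {p | x < p.re ∧ p.re ≤ y}) := by
  let g : ℝ → ℝ := fun t => fx + (t - x) * ((fy - fx) / (y - x))
  have hyx : 0 < y - x := sub_pos.2 hxy
  have hgd : ∀ t ∈ Set.Ioc x y, d ≤ g t := by
    intro t ht
    have : g t = ((y - t) * fx + (t - x) * fy) / (y - x) := by
      simp only [g]; field_simp; ring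
    rw [this, le_div_iff₀ hyx]
    nlinarith [ht.1, ht.2]
  have hsub : Complex.measurableEquivRealProd ⁻¹' (regionBetween (fun _ => d) g (Set.Ioc x y)) ⊆
      K ∩ {p | d < p.im} ∩ {p | x < p.re ∧ p.re ≤ y} := by
    rintro p ⟨ht, hp1, hp2⟩
    simp only [Complex.measurableEquivRealProd_apply] at ht hp1 hp2
    refine ⟨⟨?_, hp1⟩, ht⟩
    have hs0 : 0 ≤ (p.re - x) / (y - x) := div_nonneg (by linarith [ht.1]) hyx.le
    have hs1 : (p.re - x) / (y - x) ≤ 1 := by rw [div_le_one hyx]; linarith [ht.2]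
    have m1 : (⟨p.re, d⟩ : ℂ) ∈ K := hK.mk_mem h1 h2 hs0 hs1 (by simp; field_simp; ring) (by simp)
    have m2 : (⟨p.re, g p.re⟩ : ℂ) ∈ K :=
      hK.mk_mem h3 h4 hs0 hs1 (by simp; field_simp; ring) (by simp [g]; ring)
    have hg : 0 < g p.re - d := by linarith
    refine hK.mk_mem m1 m2 (s := (p.im - d) / (g p.re - d)) (div_nonneg (by linarith) hg.le) ?_
      (by simp) ?_
    · rw [div_le_one hg]; linarith
    · simp only; field_simp; ring
  have hgc : Continuous g := by fun_prop
  have hvol : volume (Complex.measurableEquivRealProd ⁻¹'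
      (regionBetween (fun _ => d) g (Set.Ioc x y))) =
      ENNReal.ofReal ((y - x) * (fx + fy - 2 * d) / 2) := by
    rw [Complex.volume_preserving_equiv_real_prod.measure_preimage
      (measurableSet_regionBetween measurable_const hgc.measurable measurableSet_Ioc).nullMeasurableSet]
    rw [Measure.volume_eq_prod, volume_regionBetween_eq_integral]
    · congr 1
      rw [← intervalIntegral.integral_of_le hxy.le]
      simp only [g, Pi.sub_apply]
      have : ∀ t, fx + (t - x) * ((fy - fx) / (y - x)) - d =
        (fx - d - x * ((fy - fx) / (y - x))) + t * ((fy - fx) / (y - x)) := fun t => by ring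
      simp only [this]
      rw [intervalIntegral.integral_add (by simp) (by apply Continuous.intervalIntegrable; fun_prop),
        intervalIntegral.integral_mul_const, integral_id, intervalIntegral.integral_const]
      simp only [smul_eq_mul]
      field_simp
      ring
    · exact (continuous_const.integrableOn_Icc).mono_set Set.Ioc_subset_Icc_self
    · exact (hgc.integrableOn_Icc).mono_set Set.Ioc_subset_Icc_self
    · exact measurableSet_Ioc
    · exact hgd
  rw [← hvol]
  exact measure_mono hsub

/-- The bound for a cap of `K` over a horizontal chord with the centre on or below it: `R` times the
length of the arc exceeds `R` times the length `2 * c` of the chord by at most the area of the cap.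
The arc is the graph of the height `f` of `K`, which is concave and meets the ends of the chord. -/
lemma cap_normalized {K : Set ℂ} (hK : IsCompact K) (hconv : Convex ℝ K) {R c d : ℝ}
    (hR : 0 < R) (hKR : ∀ p ∈ K, ‖p‖ ≤ R) (hc : 0 < c) (hd : 0 ≤ d) (hcd : c ^ 2 + d ^ 2 = R ^ 2)
    (hl : (⟨-c, d⟩ : ℂ) ∈ K) (hr : (⟨c, d⟩ : ℂ) ∈ K) :
    μH[1] {p | p ∈ K ∧ d ≤ p.im ∧ ∀ r : ℝ, 0 < r → p + r * Complex.I ∉ K} ≤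
      ENNReal.ofReal ((2 * c * R + (volume (K ∩ {p | d < p.im})).toReal) / R) := by
  have hdisk : ∀ x y : ℝ, (⟨x, y⟩ : ℂ) ∈ K → x ^ 2 + y ^ 2 ≤ R ^ 2 := by
    intro x y h
    have := normSq_re_im ⟨x, y⟩
    simp only at this
    rw [← this]
    exact pow_le_pow_left₀ (norm_nonneg _) (hKR _ h) 2
  have hchord : ∀ x ∈ Set.Icc (-c) c, (⟨x, d⟩ : ℂ) ∈ K := by
    intro x hx
    refine hconv.mk_mem hl hr (s := (x + c) / (2 * c)) (div_nonneg (by linarith [hx.1])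
      (by linarith)) ?_ (by simp; field_simp; ring) (by simp)
    rw [div_le_one (by linarith)]; linarith [hx.2]
  have htop : ∀ x, ∃ y, x ∈ Set.Icc (-c) c →
      ((⟨x, y⟩ : ℂ) ∈ K ∧ ∀ z, (⟨x, z⟩ : ℂ) ∈ K → z ≤ y) := by
    intro x
    by_cases hx : x ∈ Set.Icc (-c) c
    · obtain ⟨y, hy⟩ := exists_top hK (hchord x hx)
      exact ⟨y, fun _ => hy⟩
    · exact ⟨0, fun h => absurd h hx⟩
  choose f hf using htop
  have hfd : ∀ x ∈ Set.Icc (-c) c, d ≤ f x := fun x hx => (hf x hx).2 d (hchord x hx)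
  have hmc : -c ∈ Set.Icc (-c) c := ⟨le_rfl, by linarith⟩
  have hmc' : c ∈ Set.Icc (-c) c := ⟨by linarith, le_rfl⟩
  have hfR : ∀ x ∈ Set.Icc (-c) c, x ^ 2 + f x ^ 2 ≤ R ^ 2 := fun x hx =>
    hdisk _ _ (hf x hx).1
  have hf1 : f (-c) = d := le_antisymm (sq_le_imp (by nlinarith [hfR _ hmc]) hd) (hfd _ hmc)
  have hf2 : f c = d := le_antisymm (sq_le_imp (by nlinarith [hfR _ hmc']) hd) (hfd _ hmc')
  have hconc : ConcaveOn ℝ (Set.Icc (-c) c) f := by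
    refine ⟨convex_Icc _ _, ?_⟩
    intro x hx y hy a b ha hb hab
    have hm := (convex_Icc (-c) c) hx hy ha hb hab
    refine (hf _ hm).2 _ ?_
    have ha' : a = 1 - b := by linarith
    exact hconv.mk_mem (hf x hx).1 (hf y hy).1 hb (by linarith)
      (by simp [ha']; ring) (by simp [ha']; ring)
  have hfin : ∀ s : Set ℂ, volume (K ∩ {p | d < p.im} ∩ s) ≠ ⊤ := fun s =>
    ((measure_mono (Set.inter_subset_left.trans Set.inter_subset_left)).trans_lt
      hK.measure_lt_top).ne
  -- The area of the cap left of abscissa `x`, plus, up to a constant, that of the rectangle below it.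
  let F : ℝ → ℝ := fun x => (volume (K ∩ {p | d < p.im} ∩ {p | p.re ≤ x})).toReal + d * x
  have hmeas : ∀ x : ℝ, MeasurableSet {p : ℂ | p.re ≤ x} := fun x =>
    measurableSet_le Complex.measurable_re measurable_const
  have htrap : ∀ x ∈ Set.Icc (-c) c, ∀ y ∈ Set.Icc (-c) c, x < y →
      (y - x) * (f x + f y) / 2 ≤ F y - F x := by
    intro x hx y hy hxy
    have h1 := trapezoid_le hconv hxy (hchord x hx) (hchord y hy) (hf x hx).1 (hf y hy).1
      (hfd x hx) (hfd y hy)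
    rw [ENNReal.ofReal_le_iff_le_toReal (hfin _)] at h1
    have h2 : (volume (K ∩ {p | d < p.im} ∩ {p | p.re ≤ y})).toReal =
        (volume (K ∩ {p | d < p.im} ∩ {p | p.re ≤ x})).toReal +
        (volume (K ∩ {p | d < p.im} ∩ {p | x < p.re ∧ p.re ≤ y})).toReal := by
      rw [← ENNReal.toReal_add (hfin _) (hfin _),
        ← measure_inter_add_sdiff (K ∩ {p | d < p.im} ∩ {p | p.re ≤ y}) (hmeas x)]
      congr 3
      · ext p
        simp only [Set.mem_inter_iff, Set.mem_ofPred_eq]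
        constructor
        · rintro ⟨⟨h, _⟩, h'⟩; exact ⟨h, h'⟩
        · rintro ⟨h, h'⟩; exact ⟨⟨h, h'.trans hxy.le⟩, h'⟩
      · ext p
        simp only [Set.mem_inter_iff, Set.mem_ofPred_eq, Set.mem_sdiff, not_le]
        tauto
    simp only [F]
    rw [h2]
    linarith
  have hvar := eVariationOn_graph_le hc hR hcd hconc hf1 hf2
    (fun x hx => hd.trans (hfd x hx)) hfR htrap
  have hH := hausdorff_image_le_of_variation hc hvar
  refine (measure_mono ?_).trans (hH.trans (ENNReal.ofReal_le_ofReal ?_))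
  · rintro p ⟨hp, hpd, hpr⟩
    have hre : p.re ∈ Set.Icc (-c) c := by
      have := hdisk p.re p.im hp
      rw [Set.mem_Icc, ← abs_le]
      exact abs_le_of_sq_le_sq (by nlinarith) hc.le
    refine ⟨p.re, hre, ?_⟩
    refine Complex.ext rfl ?_
    change f p.re = p.im
    refine le_antisymm ?_ ((hf _ hre).2 _ hp)
    by_contra h
    push Not at h
    refine hpr (f p.re - p.im) (by linarith) ?_
    convert (hf _ hre).1 using 1
    apply Complex.ext <;> simp
  · have hFc : F c ≤ (volume (K ∩ {p | d < p.im})).toReal + d * c := by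
      refine add_le_add_left (ENNReal.toReal_mono ?_ (measure_mono Set.inter_subset_left)) _
      simpa using hfin Set.univ
    have hFc' : -(d * c) ≤ F (-c) := by
      simp only [F]
      have : 0 ≤ (volume (K ∩ {p | d < p.im} ∩ {p | p.re ≤ -c})).toReal := ENNReal.toReal_nonneg
      linarith
    refine div_le_div_of_nonneg_right ?_ hR.le
    linarith

/-- The cross product of two plane vectors. -/
def cr (z w : ℂ) : ℝ := z.re * w.im - z.im * w.re

/-- The part of `K` strictly to the right of the directed line from `s` to `t`. -/
def cap (K : Set ℂ) (s t : ℂ) : Set ℂ := K ∩ {p | cr (t - s) (p - s) < 0}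

/-- The points of `K` weakly to the right of the directed line from `s` to `t` that leave `K` for good
when moved perpendicularly away from that line. This is the part of the frontier which bounds the cap,
described so that it is a graph over the chord. -/
def capArc (K : Set ℂ) (s t : ℂ) : Set ℂ :=
  {p | p ∈ K ∧ cr (t - s) (p - s) ≤ 0 ∧ ∀ r : ℝ, 0 < r → p - r * Complex.I * (t - s) ∉ K}

/-- The arc of a cap is at most as long as its chord plus `1 / R` times the area of the cap, if the
centre is not strictly on the side of the cap. -/
lemma cap_bound {K : Set ℂ} (hK : IsCompact K) (hconv : Convex ℝ K) {R : ℝ} {s t : ℂ}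
    (hR : 0 < R) (hKR : ∀ p ∈ K, ‖p‖ ≤ R) (hs : s ∈ K) (ht : t ∈ K) (hsR : ‖s‖ = R)
    (htR : ‖t‖ = R) (hst : s ≠ t) (hcr : 0 ≤ cr s t) :
    μH[1] (capArc K s t) ≤
      ENNReal.ofReal ((‖t - s‖ * R + (volume (cap K s t)).toReal) / R) := by
  obtain ⟨u, hu⟩ : ∃ u, u = ‖t - s‖ := ⟨_, rfl⟩
  have hu0 : 0 < u := by rw [hu]; exact norm_pos_iff.2 (sub_ne_zero.2 hst.symm)
  have husq : u ^ 2 = (t.re - s.re) ^ 2 + (t.im - s.im) ^ 2 := by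
    rw [hu, normSq_re_im]; simp
  have hs2 := normSq_re_im s
  have ht2 := normSq_re_im t
  rw [hsR] at hs2
  rw [htR] at ht2
  have hω : ‖-(starRingEnd ℂ (t - s)) / (u : ℂ)‖ = 1 := by
    rw [norm_div, norm_neg, Complex.norm_conj, ← hu, Complex.norm_real, Real.norm_eq_abs,
      abs_of_pos hu0, div_self hu0.ne']
  -- Rotate so that the chord becomes horizontal, with `K`'s cap above it.
  obtain ⟨w, hw⟩ : ∃ w : Circle, (w : ℂ) = -(starRingEnd ℂ (t - s)) / u :=
    ⟨⟨_, mem_sphere_zero_iff_norm.2 hω⟩, rfl⟩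
  let ρ : ℂ ≃ₗᵢ[ℝ] ℂ := rotation w
  have hρ : ∀ p, ρ p = -(starRingEnd ℂ (t - s)) / u * p := fun p => by
    rw [← hw]; exact rotation_apply w p
  have hρre : ∀ p, (ρ p).re = -((t.re - s.re) * p.re + (t.im - s.im) * p.im) / u := by
    intro p; rw [hρ, neg_div, neg_mul, Complex.neg_re, Complex.mul_re, Complex.div_ofReal_re,
      Complex.div_ofReal_im]; simp; ring
  have hρim : ∀ p, (ρ p).im = -((t.re - s.re) * p.im - (t.im - s.im) * p.re) / u := by
    intro p; rw [hρ, neg_div, neg_mul, Complex.neg_im, Complex.mul_im, Complex.div_ofReal_re,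
      Complex.div_ofReal_im]; simp; ring
  have hd : 0 ≤ cr s t / u := div_nonneg hcr hu0.le
  have hρs : ρ s = ⟨u / 2, cr s t / u⟩ := by
    apply Complex.ext
    · rw [hρre]; field_simp; linarith
    · rw [hρim]; unfold cr; simp only; ring
  have hρt : ρ t = ⟨-(u / 2), cr s t / u⟩ := by
    apply Complex.ext
    · rw [hρre]; field_simp; linarith
    · rw [hρim]; unfold cr; simp only; ring
  have hmemK : ∀ p, ρ p ∈ ρ '' K ↔ p ∈ K := fun p => ρ.injective.mem_set_image
  have hcd : (u / 2) ^ 2 + (cr s t / u) ^ 2 = R ^ 2 := by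
    have := normSq_re_im (ρ s)
    rw [ρ.norm_map, hρs, hsR] at this
    exact this.symm
  have main := cap_normalized (K := ρ '' K) (hK.image ρ.continuous)
    (hconv.linear_image (ρ.toLinearEquiv : ℂ →ₗ[ℝ] ℂ)) hR
    (by rintro _ ⟨p, hp, rfl⟩; rw [ρ.norm_map]; exact hKR p hp) (half_pos hu0) hd hcd
    (hρt ▸ Set.mem_image_of_mem ρ ht) (hρs ▸ Set.mem_image_of_mem ρ hs)
  have him : ∀ p, (ρ p).im = cr s t / u - cr (t - s) (p - s) / u := by
    intro p; rw [hρim]; unfold cr; simp; ring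
  have e1 : ρ ⁻¹' (ρ '' K ∩ {p | cr s t / u < p.im}) = cap K s t := by
    ext p
    simp only [Set.mem_preimage, Set.mem_inter_iff, hmemK, cap, Set.mem_ofPred_eq, him]
    refine and_congr_right fun _ => ?_
    rw [lt_sub_iff_add_lt, add_lt_iff_neg_left, div_neg_iff]
    constructor
    · rintro (h | h)
      · linarith
      · exact h.1
    · intro h; exact Or.inr ⟨h, hu0⟩
  have e2 : ρ ⁻¹' {p | p ∈ ρ '' K ∧ cr s t / u ≤ p.im ∧
      ∀ r : ℝ, 0 < r → p + r * Complex.I ∉ ρ '' K} = capArc K s t := by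
    ext p
    simp only [Set.mem_preimage, Set.mem_ofPred_eq, hmemK, capArc, him]
    refine and_congr_right fun _ => and_congr ?_ ?_
    · rw [le_sub_iff_add_le, add_le_iff_nonpos_right]
      rw [div_le_iff₀ hu0, zero_mul]
    · have key : ∀ r : ℝ, ρ (p - r * Complex.I * (t - s)) = ρ p + ((r * u : ℝ) : ℂ) * Complex.I := by
        intro r
        apply Complex.ext
        · rw [hρre, Complex.add_re, hρre]; simp; field_simp; ring
        · rw [hρim, Complex.add_im, hρim]; simp; field_simp; rw [husq]; ring
      constructor
      · intro h r hr
        rw [← hmemK, key]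
        exact h _ (mul_pos hr hu0)
      · intro h r hr
        have := h (r / u) (div_pos hr hu0)
        rwa [← hmemK, key, div_mul_cancel₀ _ hu0.ne'] at this
  have v1 : volume (cap K s t) = volume (ρ '' K ∩ {p | cr s t / u < p.im}) := by
    rw [← e1]
    exact ρ.measurePreserving.measure_preimage_emb
      ρ.toHomeomorph.toMeasurableEquiv.measurableEmbedding _
  have v2 : μH[1] (capArc K s t) = μH[1] {p | p ∈ ρ '' K ∧ cr s t / u ≤ p.im ∧
      ∀ r : ℝ, 0 < r → p + r * Complex.I ∉ ρ '' K} := by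
    rw [← e2]
    exact ρ.toIsometryEquiv.hausdorffMeasure_preimage 1 _
  rw [v2, v1, ← hu]
  convert main using 4
  ring

/-! ### Covering the frontier by arcs -/

/-- A convex body has a supporting line at every frontier point. -/
lemma exists_support {K : Set ℂ} (hconv : Convex ℝ K)
    (hint : (interior K).Nonempty) {p : ℂ} (hp : p ∈ frontier K) :
    ∃ u v : ℝ, (u ≠ 0 ∨ v ≠ 0) ∧ ∀ q ∈ K, u * (q.re - p.re) + v * (q.im - p.im) ≤ 0 := by
  obtain ⟨f, hf⟩ := geometric_hahn_banach_open_point hconv.interior isOpen_interior hp.2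
  have hexp : ∀ q, f q = f 1 * q.re + f Complex.I * q.im := by
    intro q
    have : q = q.re • (1 : ℂ) + q.im • Complex.I := by apply Complex.ext <;> simp
    conv_lhs => rw [this]
    rw [map_add, map_smul, map_smul, smul_eq_mul, smul_eq_mul]; ring
  refine ⟨f 1, f Complex.I, ?_, ?_⟩
  · by_contra h
    push Not at h
    obtain ⟨a, ha⟩ := hint
    have := hf a ha
    rw [hexp a, hexp p, h.1, h.2] at this
    simp at this
  · intro q hq
    have hq' : q ∈ closure (interior K) := by
      rw [hconv.closure_interior_eq_closure_of_nonempty_interior hint]; exact subset_closure hq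
    have : q ∈ {x | f x ≤ f p} := by
      refine closure_minimal ?_ (isClosed_le f.continuous continuous_const) hq'
      exact fun x hx => (hf x hx).le
    have h2 : f q ≤ f p := this
    rw [hexp q, hexp p] at h2
    linarith

/-- A point of the disk strictly to the right of a chord, on whose left the centre lies, has its
foot strictly inside the chord. -/
lemma foot_mem {R x y a b α k : ℝ} (hs : R ^ 2 = x ^ 2 + y ^ 2)
    (ht : R ^ 2 = (x + a) ^ 2 + (y + b) ^ 2)
    (hq : (x + α * a + k * b) ^ 2 + (y + α * b - k * a) ^ 2 ≤ R ^ 2) (hk : 0 < k)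
    (hcr : 0 ≤ x * b - y * a) (hD : 0 < a ^ 2 + b ^ 2) : 0 < α ∧ 0 < 1 - α := by
  have h0 : 2 * (x * a + y * b) + (a ^ 2 + b ^ 2) = 0 := by linarith
  have h1 := mul_nonneg hk.le hcr
  have h2 : α * (2 * (x * a + y * b) + (a ^ 2 + b ^ 2)) = 0 := by rw [h0, mul_zero]
  have h3 : k ^ 2 * (a ^ 2 + b ^ 2) ≤ α * (1 - α) * (a ^ 2 + b ^ 2) := by linarith
  have h4 := le_of_mul_le_mul_right h3 hD
  have h5 : 0 < k ^ 2 := by positivity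
  constructor <;> by_contra h <;> push Not at h
  · have := mul_nonneg (neg_nonneg.2 h) (by linarith : 0 ≤ 1 - α)
    linarith
  · have := mul_nonneg (by linarith : 0 ≤ α) (neg_nonneg.2 h)
    linarith

/-- A frontier point of `K` weakly to the right of a chord lies on the arc it cuts off. A point on the
chord itself has to be treated with care: it need not be on the arc when `K` lies on the right of the
chord only, whence the last hypothesis. -/
lemma mem_capArc {K : Set ℂ} (hK : IsCompact K) (hconv : Convex ℝ K)
    (hint : (interior K).Nonempty) {R : ℝ} {s t : ℂ} (hKR : ∀ p ∈ K, ‖p‖ ≤ R) (hs : s ∈ K)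
    (ht : t ∈ K) (hsR : ‖s‖ = R) (htR : ‖t‖ = R) (hst : s ≠ t) (hcr : 0 ≤ cr s t) {p : ℂ}
    (hp : p ∈ frontier K) (hps : cr (t - s) (p - s) ≤ 0)
    (hw : cr (t - s) (p - s) < 0 ∨ ∃ w ∈ K, 0 < cr (t - s) (w - s)) : p ∈ capArc K s t := by
  refine ⟨hK.isClosed.frontier_subset hp, hps, ?_⟩
  intro r hr hq
  obtain ⟨u, v, huv, hsup⟩ := exists_support hconv hint hp
  have hs2 := normSq_re_im s
  have ht2 := normSq_re_im t
  rw [hsR] at hs2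
  rw [htR] at ht2
  have hq2 := normSq_re_im (p - r * Complex.I * (t - s))
  have hqR := pow_le_pow_left₀ (norm_nonneg _) (hKR _ hq) 2
  rw [hq2] at hqR
  have h1 := hsup s hs
  have h2 := hsup t ht
  have h3 := hsup _ hq
  have hqre : (p - r * Complex.I * (t - s)).re = p.re + r * (t.im - s.im) := by simp
  have hqim : (p - r * Complex.I * (t - s)).im = p.im - r * (t.re - s.re) := by simp
  rw [hqre, hqim] at h3 hqR
  -- `D = (a, b)` is the direction of the chord and `N = (b, -a)` its right normal.
  obtain ⟨a, ha⟩ : ∃ a, a = t.re - s.re := ⟨_, rfl⟩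
  obtain ⟨b, hb⟩ : ∃ b, b = t.im - s.im := ⟨_, rfl⟩
  rw [← ha, ← hb] at h3 hqR
  have hD : 0 < a ^ 2 + b ^ 2 := by
    rcases ne_or_eq a 0 with h | h
    · positivity
    · rcases ne_or_eq b 0 with h' | h'
      · positivity
      · exact absurd (Complex.ext (by linarith) (by linarith)) hst
  -- Coordinates of `p`: `p = s + α D + h N`.
  obtain ⟨α, hα⟩ : ∃ α, α = ((p.re - s.re) * a + (p.im - s.im) * b) / (a ^ 2 + b ^ 2) := ⟨_, rfl⟩
  obtain ⟨h, hh⟩ : ∃ h, h = -cr (t - s) (p - s) / (a ^ 2 + b ^ 2) := ⟨_, rfl⟩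
  have hcrp : cr (t - s) (p - s) = a * (p.im - s.im) - b * (p.re - s.re) := by
    simp [cr, ha, hb]
  have h0 : 0 ≤ h := by rw [hh]; exact div_nonneg (by linarith) hD.le
  have pre : p.re = s.re + α * a + h * b := by
    rw [hα, hh, hcrp]; field_simp; ring
  have pim : p.im = s.im + α * b - h * a := by
    rw [hα, hh, hcrp]; field_simp; ring
  have tre : t.re = s.re + a := by linarith
  have tim : t.im = s.im + b := by linarith
  have hcr' : 0 ≤ s.re * b - s.im * a := by
    have : cr s t = s.re * b - s.im * a := by unfold cr; rw [tre, tim]; ring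
    linarith
  rw [tre, tim] at ht2 h2
  have hk : 0 < h + r := by linarith
  -- The foot of `p` on the chord is strictly inside it.
  obtain ⟨hα0, hα1⟩ : 0 < α ∧ 0 < 1 - α := by
    refine foot_mem hs2 ht2 ?_ hk hcr' hD
    rw [pre, pim] at hqR
    linarith
  rw [pre, pim] at h1 h2 h3
  have hN : u * b - v * a ≤ 0 := by
    have : r * (u * b - v * a) ≤ 0 := by linarith
    nlinarith
  have hsum : (1 - α) * (u * (s.re - (s.re + α * a + h * b)) + v * (s.im - (s.im + α * b - h * a)))
      + α * (u * (s.re + a - (s.re + α * a + h * b)) + v * (s.im + b - (s.im + α * b - h * a)))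
      = -(h * (u * b - v * a)) := by ring
  have hn1 := mul_nonneg h0 (neg_nonneg.2 hN)
  have hn2 := mul_nonneg hα1.le (neg_nonneg.2 h1)
  have hn3 := mul_nonneg hα0.le (neg_nonneg.2 h2)
  have hhN : h * (u * b - v * a) = 0 := by linarith
  have e1 : u * (s.re - (s.re + α * a + h * b)) + v * (s.im - (s.im + α * b - h * a)) = 0 := by
    have : (1 - α) * (u * (s.re - (s.re + α * a + h * b)) +
      v * (s.im - (s.im + α * b - h * a))) = 0 := by linarith
    exact (mul_eq_zero.1 this).resolve_left hα1.ne'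
  have e2 : u * a + v * b = 0 := by
    have : α * (u * a + v * b) = 0 := by linarith
    exact (mul_eq_zero.1 this).resolve_left hα0.ne'
  have e3 : u * b - v * a = 0 := by
    rcases hw with hw | ⟨w, hw, hwc⟩
    · have : h ≠ 0 := by
        rw [hh]; exact (div_pos (by linarith) hD).ne'
      exact (mul_eq_zero.1 hhN).resolve_left this
    · have h4 := hsup w hw
      have hwc' : 0 < a * (w.im - s.im) - b * (w.re - s.re) := by
        simpa [cr, ha, hb] using hwc
      have h5 : u * (w.re - s.re) + v * (w.im - s.im) ≤ 0 := by
        rw [pre, pim] at h4; linarith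
      have h6 : (a ^ 2 + b ^ 2) * (u * (w.re - s.re) + v * (w.im - s.im)) =
          (u * a + v * b) * (a * (w.re - s.re) + b * (w.im - s.im)) -
          (u * b - v * a) * (a * (w.im - s.im) - b * (w.re - s.re)) := by ring
      rw [e2, zero_mul] at h6
      have h7 := mul_nonneg hD.le (neg_nonneg.2 h5)
      have h8 := mul_nonneg (neg_nonneg.2 hN) hwc'.le
      have h9 : (u * b - v * a) * (a * (w.im - s.im) - b * (w.re - s.re)) = 0 := by linarith
      exact (mul_eq_zero.1 h9).resolve_right hwc'.ne'
  have hu : u = 0 := by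
    have : u * (a ^ 2 + b ^ 2) = 0 := by linear_combination a * e2 + b * e3
    exact (mul_eq_zero.1 this).resolve_right hD.ne'
  have hv : v = 0 := by
    have : v * (a ^ 2 + b ^ 2) = 0 := by linear_combination b * e2 - a * e3
    exact (mul_eq_zero.1 this).resolve_right hD.ne'
  rcases huv with h | h
  · exact h hu
  · exact h hv

lemma frontier_subset_two {K : Set ℂ} (hK : IsCompact K) (hconv : Convex ℝ K)
    (hint : (interior K).Nonempty) {R : ℝ} {s t : ℂ} (hKR : ∀ p ∈ K, ‖p‖ ≤ R) (hs : s ∈ K)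
    (ht : t ∈ K) (hsR : ‖s‖ = R) (htR : ‖t‖ = R) (hst : s ≠ t) (hcr : cr s t = 0) :
    frontier K ⊆ capArc K s t ∪ capArc K t s := by
  intro p hp
  have hcr' : cr t s = 0 := by unfold cr at *; linarith
  have hneg : ∀ w, cr (s - t) (w - t) = -cr (t - s) (w - s) := by
    intro w; unfold cr at *; simp; linarith
  rcases lt_trichotomy (cr (t - s) (p - s)) 0 with h | h | h
  · exact Or.inl (mem_capArc hK hconv hint hKR hs ht hsR htR hst hcr.ge hp h.le (Or.inl h))
  · by_contra hnot
    rw [Set.mem_union, not_or] at hnot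
    have hw : ∃ w ∈ K, 0 < cr (t - s) (w - s) := by
      by_contra hno
      push Not at hno
      refine hnot.2 ⟨hK.isClosed.frontier_subset hp, by rw [hneg, h, neg_zero], ?_⟩
      intro r hr hmem
      have h2 := hno _ hmem
      have hD : 0 < (t.re - s.re) ^ 2 + (t.im - s.im) ^ 2 := by
        have h3 := normSq_re_im (t - s)
        rw [Complex.sub_re, Complex.sub_im] at h3
        rw [← h3]
        have := norm_pos_iff.2 (sub_ne_zero.2 hst.symm)
        positivity
      have h4 : cr (t - s) (p - r * Complex.I * (s - t) - s) = cr (t - s) (p - s) +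
          r * ((t.re - s.re) ^ 2 + (t.im - s.im) ^ 2) := by
        unfold cr; simp; ring
      rw [h4, h] at h2
      have := mul_pos hr hD
      linarith
    exact hnot.1 (mem_capArc hK hconv hint hKR hs ht hsR htR hst hcr.ge hp h.le (Or.inr hw))
  · refine Or.inr (mem_capArc hK hconv hint hKR ht hs htR hsR hst.symm hcr'.ge hp ?_ (Or.inl ?_))
    · rw [hneg]; linarith
    · rw [hneg]; linarith

lemma frontier_subset_three {K : Set ℂ} (hK : IsCompact K) (hconv : Convex ℝ K)
    (hint : (interior K).Nonempty) {R : ℝ} {a b c : ℂ} (hKR : ∀ p ∈ K, ‖p‖ ≤ R) (ha : a ∈ K)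
    (hb : b ∈ K) (hc : c ∈ K) (haR : ‖a‖ = R) (hbR : ‖b‖ = R) (hcR : ‖c‖ = R)
    (hab : 0 < cr a b) (hbc : 0 < cr b c) (hca : 0 < cr c a) :
    frontier K ⊆ capArc K a b ∪ capArc K b c ∪ capArc K c a := by
  intro p hp
  have hne : ∀ {x y : ℂ}, 0 < cr x y → x ≠ y := by
    rintro x y h rfl; unfold cr at h; linarith
  have h1 : cr (b - a) (c - a) = cr a b + cr b c + cr c a := by unfold cr; simp; ring
  have h2 : cr (c - b) (a - b) = cr a b + cr b c + cr c a := by unfold cr; simp; ring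
  have h3 : cr (a - c) (b - c) = cr a b + cr b c + cr c a := by unfold cr; simp; ring
  by_cases ha1 : cr (b - a) (p - a) ≤ 0
  · exact Or.inl (Or.inl (mem_capArc hK hconv hint hKR ha hb haR hbR (hne hab) hab.le hp ha1
      (Or.inr ⟨c, hc, by linarith⟩)))
  by_cases hb1 : cr (c - b) (p - b) ≤ 0
  · exact Or.inl (Or.inr (mem_capArc hK hconv hint hKR hb hc hbR hcR (hne hbc) hbc.le hp hb1
      (Or.inr ⟨a, ha, by linarith⟩)))
  by_cases hc1 : cr (a - c) (p - c) ≤ 0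
  · exact Or.inr (mem_capArc hK hconv hint hKR hc ha hcR haR (hne hca) hca.le hp hc1
      (Or.inr ⟨b, hb, by linarith⟩))
  exfalso
  push Not at ha1 hb1 hc1
  obtain ⟨u, v, huv, hsup⟩ := exists_support hconv hint hp
  have sa := hsup a ha
  have sb := hsup b hb
  have sc := hsup c hc
  obtain ⟨x, hx⟩ : ∃ x, x = u * (a.re - p.re) + v * (a.im - p.im) := ⟨_, rfl⟩
  obtain ⟨y, hy⟩ : ∃ x, x = u * (b.re - p.re) + v * (b.im - p.im) := ⟨_, rfl⟩
  obtain ⟨z, hz⟩ : ∃ x, x = u * (c.re - p.re) + v * (c.im - p.im) := ⟨_, rfl⟩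
  rw [← hx] at sa
  rw [← hy] at sb
  rw [← hz] at sc
  -- The values `cr` at `p` are, up to scaling, barycentric coordinates of `p`.
  have hbary : cr (c - b) (p - b) * x + cr (a - c) (p - c) * y + cr (b - a) (p - a) * z = 0 := by
    rw [hx, hy, hz]; unfold cr; simp; ring
  have m1 := mul_nonneg hb1.le (neg_nonneg.2 sa)
  have m2 := mul_nonneg hc1.le (neg_nonneg.2 sb)
  have m3 := mul_nonneg ha1.le (neg_nonneg.2 sc)
  have x0 : x = 0 := (mul_eq_zero.1 (by linarith : cr (c - b) (p - b) * x = 0)).resolve_left hb1.ne'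
  have y0 : y = 0 := (mul_eq_zero.1 (by linarith : cr (a - c) (p - c) * y = 0)).resolve_left hc1.ne'
  have z0 : z = 0 := (mul_eq_zero.1 (by linarith : cr (b - a) (p - a) * z = 0)).resolve_left ha1.ne'
  rw [x0] at hx
  rw [y0] at hy
  rw [z0] at hz
  have hS : 0 < (b.re - a.re) * (c.im - a.im) - (b.im - a.im) * (c.re - a.re) := by
    have : 0 < cr (b - a) (c - a) := by linarith
    simpa [cr] using this
  have hu : u = 0 := by
    refine (mul_eq_zero.1 (?_ : u * _ = 0)).resolve_right hS.ne'
    linear_combination (hx - hy) * (c.im - a.im) - (hx - hz) * (b.im - a.im)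
  have hv : v = 0 := by
    refine (mul_eq_zero.1 (?_ : v * _ = 0)).resolve_right hS.ne'
    linear_combination (hx - hz) * (b.re - a.re) - (hx - hy) * (c.re - a.re)
  rcases huv with h | h
  · exact h hu
  · exact h hv

/-! ### Two or three points on the circumcircle -/

lemma measurableSet_cap {K : Set ℂ} (hK : IsCompact K) (s t : ℂ) : MeasurableSet (cap K s t) := by
  refine hK.measurableSet.inter (measurableSet_lt ?_ measurable_const)
  unfold cr
  fun_prop

lemma cap_subset {K : Set ℂ} {s t : ℂ} : cap K s t ⊆ K := Set.inter_subset_left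

lemma norm_sub_le_two {R : ℝ} {s t : ℂ} (hs : ‖s‖ = R) (ht : ‖t‖ = R) : ‖t - s‖ ≤ 2 * R := by
  have := norm_sub_le t s
  linarith

/-- Favard's inequality when `K` contains two antipodal points of the circle: the diameter cuts `K`
into two caps. -/
lemma favard_two {K : Set ℂ} (hK : IsCompact K) (hconv : Convex ℝ K)
    (hint : (interior K).Nonempty) {R : ℝ} {s t : ℂ} (hR : 0 < R) (hKR : ∀ p ∈ K, ‖p‖ ≤ R)
    (hs : s ∈ K) (ht : t ∈ K) (hsR : ‖s‖ = R) (htR : ‖t‖ = R) (hst : s ≠ t) (hcr : cr s t = 0) :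
    R * (μH[1] (frontier K)).toReal ≤ 4 * R ^ 2 + (volume K).toReal := by
  have hcr' : cr t s = 0 := by unfold cr at *; linarith
  have b1 := cap_bound hK hconv hR hKR hs ht hsR htR hst hcr.ge
  have b2 := cap_bound hK hconv hR hKR ht hs htR hsR hst.symm hcr'.ge
  have hfin : ∀ x y, volume (cap K x y) ≠ ⊤ := fun x y =>
    ((measure_mono cap_subset).trans_lt hK.measure_lt_top).ne
  have hnn : ∀ x y, 0 ≤ (‖y - x‖ * R + (volume (cap K x y)).toReal) / R := fun x y => by
    positivity
  have hP : μH[1] (frontier K) ≤ _ := (measure_mono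
    (frontier_subset_two hK hconv hint hKR hs ht hsR htR hst hcr)).trans
    ((measure_union_le _ _).trans (add_le_add b1 b2))
  rw [← ENNReal.ofReal_add (hnn _ _) (hnn _ _)] at hP
  have hP' := ENNReal.toReal_le_of_le_ofReal (add_nonneg (hnn _ _) (hnn _ _)) hP
  have hdisj : Disjoint (cap K s t) (cap K t s) := by
    rw [Set.disjoint_left]
    rintro p ⟨_, h1⟩ ⟨_, h2⟩
    simp only [Set.mem_ofPred_eq, cr, Complex.sub_re, Complex.sub_im] at h1 h2 hcr
    linarith
  have hvol : (volume (cap K s t)).toReal + (volume (cap K t s)).toReal ≤ (volume K).toReal := by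
    rw [← ENNReal.toReal_add (hfin _ _) (hfin _ _),
      ← measure_union hdisj (measurableSet_cap hK _ _)]
    exact ENNReal.toReal_mono hK.measure_lt_top.ne
      (measure_mono (Set.union_subset cap_subset cap_subset))
  rw [← add_div, le_div_iff₀ hR] at hP'
  have n1 := mul_le_mul_of_nonneg_right (norm_sub_le_two hsR htR) hR.le
  have n2 := mul_le_mul_of_nonneg_right (norm_sub_le_two htR hsR) hR.le
  linarith

/-- The caps over adjacent sides of a positively oriented inscribed triangle do not meet. -/
lemma cap_disjoint {K : Set ℂ} {R : ℝ} {a b c : ℂ} (hKR : ∀ p ∈ K, ‖p‖ ≤ R)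
    (haR : ‖a‖ = R) (hbR : ‖b‖ = R) (hcR : ‖c‖ = R) (hab : a ≠ b)
    (hS : 0 < cr (b - a) (c - b)) : Disjoint (cap K a b) (cap K b c) := by
  rw [Set.disjoint_left]
  rintro p ⟨hp, h1⟩ ⟨_, h2⟩
  have na := normSq_re_im a
  have nb := normSq_re_im b
  have nc := normSq_re_im c
  have np := normSq_re_im p
  have nab := normSq_re_im (a - b)
  have nab0 : 0 < ‖a - b‖ ^ 2 := by
    have := norm_pos_iff.2 (sub_ne_zero.2 hab); positivity
  have npR := pow_le_pow_left₀ (norm_nonneg _) (hKR p hp) 2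
  rw [haR] at na
  rw [hbR] at nb
  rw [hcR] at nc
  simp only [Set.mem_ofPred_eq] at h1 h2
  have key : cr (b - a) (c - b) * (b.re * (p.re - b.re) + b.im * (p.im - b.im)) =
      cr (c - b) (p - b) * (b.re * (a.re - b.re) + b.im * (a.im - b.im)) +
      cr (b - a) (p - a) * (b.re * (c.re - b.re) + b.im * (c.im - b.im)) := by
    unfold cr; simp; ring
  rw [Complex.sub_re, Complex.sub_im] at nab
  have k1 : b.re * (a.re - b.re) + b.im * (a.im - b.im) < 0 := by linarith
  have k2 : b.re * (c.re - b.re) + b.im * (c.im - b.im) ≤ 0 := by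
    linarith [sq_nonneg (b.re - c.re), sq_nonneg (b.im - c.im)]
  have k3 : b.re * (p.re - b.re) + b.im * (p.im - b.im) ≤ 0 := by
    linarith [sq_nonneg (b.re - p.re), sq_nonneg (b.im - p.im)]
  have m1 := mul_pos (neg_pos.2 h2) (neg_pos.2 k1)
  have m2 := mul_nonneg (neg_nonneg.2 h1.le) (neg_nonneg.2 k2)
  have m3 := mul_nonneg hS.le (neg_nonneg.2 k3)
  linarith

/-- The real-linear map taking `1, i` to `z, w`. -/
noncomputable def frameMap (z w : ℂ) : ℂ →ₗ[ℝ] ℂ :=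
  Complex.reLm.smulRight z + Complex.imLm.smulRight w

lemma frameMap_apply (z w p : ℂ) : frameMap z w p = p.re • z + p.im • w := by
  simp [frameMap]

lemma det_frameMap (z w : ℂ) : LinearMap.det (frameMap z w) = cr z w := by
  rw [← LinearMap.det_toMatrix Complex.basisOneI, Matrix.det_fin_two]
  simp [LinearMap.toMatrix_apply, frameMap_apply, cr]
  ring

/-- The area of the standard triangle. -/
lemma volume_stdTriangle :
    volume {p : ℂ | 0 < p.re ∧ p.re < 1 ∧ 0 < p.im ∧ p.im < 1 - p.re} = ENNReal.ofReal (1 / 2) := by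
  have h : {p : ℂ | 0 < p.re ∧ p.re < 1 ∧ 0 < p.im ∧ p.im < 1 - p.re} =
      Complex.measurableEquivRealProd ⁻¹'
        (regionBetween (fun _ => 0) (fun x => 1 - x) (Set.Ioo 0 1)) := by
    ext p
    simp only [regionBetween, Set.mem_preimage, Set.mem_ofPred_eq,
      Complex.measurableEquivRealProd_apply, Set.mem_Ioo]
    tauto
  rw [h, Complex.volume_preserving_equiv_real_prod.measure_preimage
    (measurableSet_regionBetween measurable_const (by fun_prop)
      measurableSet_Ioo).nullMeasurableSet, Measure.volume_eq_prod,
    volume_regionBetween_eq_integral]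
  · congr 1
    rw [← integral_Ioc_eq_integral_Ioo, ← intervalIntegral.integral_of_le zero_le_one]
    simp only [Pi.sub_apply, sub_zero]
    rw [intervalIntegral.integral_sub (by simp) (by simp)]
    simp
    norm_num
  · exact (continuous_const.integrableOn_Icc).mono_set Set.Ioo_subset_Icc_self
  · exact ((continuous_const.sub continuous_id).integrableOn_Icc).mono_set Set.Ioo_subset_Icc_self
  · exact measurableSet_Ioo
  · intro x hx; linarith [hx.2]

/-- What is left of `K` after removing the caps over the sides of an inscribed triangle has at least
the area of the triangle. -/
lemma triangle_volume_le {K : Set ℂ} (hconv : Convex ℝ K) {a b c : ℂ} (ha : a ∈ K)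
    (hb : b ∈ K) (hc : c ∈ K) (hS : 0 < cr (b - a) (c - a)) :
    ENNReal.ofReal (cr (b - a) (c - a) / 2) ≤
      volume (K \ (cap K a b ∪ cap K b c ∪ cap K c a)) := by
  have hsub : (fun z => a + z) '' (frameMap (b - a) (c - a) ''
      {p : ℂ | 0 < p.re ∧ p.re < 1 ∧ 0 < p.im ∧ p.im < 1 - p.re}) ⊆
      K \ (cap K a b ∪ cap K b c ∪ cap K c a) := by
    rintro _ ⟨_, ⟨p, ⟨h1, h2, h3, h4⟩, rfl⟩, rfl⟩
    obtain ⟨z, hz⟩ : ∃ z, z = a + frameMap (b - a) (c - a) p := ⟨_, rfl⟩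
    simp only
    rw [← hz]
    have zre : z.re = a.re + p.re * (b.re - a.re) + p.im * (c.re - a.re) := by
      rw [hz, frameMap_apply]; simp; ring
    have zim : z.im = a.im + p.re * (b.im - a.im) + p.im * (c.im - a.im) := by
      rw [hz, frameMap_apply]; simp; ring
    have e1 : cr (b - a) (z - a) = p.im * cr (b - a) (c - a) := by
      unfold cr; simp only [Complex.sub_re, Complex.sub_im, zre, zim]; ring
    have e2 : cr (c - b) (z - b) = (1 - p.re - p.im) * cr (b - a) (c - a) := by
      unfold cr; simp only [Complex.sub_re, Complex.sub_im, zre, zim]; ring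
    have e3 : cr (a - c) (z - c) = p.re * cr (b - a) (c - a) := by
      unfold cr; simp only [Complex.sub_re, Complex.sub_im, zre, zim]; ring
    refine ⟨?_, ?_⟩
    · have hm : ((1 - p.re - p.im) • a + p.re • b) + p.im • c ∈ K := by
        have := hconv.sum_mem (t := Finset.univ) (w := ![1 - p.re - p.im, p.re, p.im])
          (z := ![a, b, c]) (by intro i _; fin_cases i <;> simp <;> linarith)
          (by simp [Fin.sum_univ_three]; ring) (by intro i _; fin_cases i <;> simpa)
        simpa [Fin.sum_univ_three] using this
      convert hm using 1
      apply Complex.ext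
      · rw [zre]; simp; ring
      · rw [zim]; simp; ring
    · rintro ((⟨_, h⟩ | ⟨_, h⟩) | ⟨_, h⟩)
      · rw [Set.mem_ofPred_eq, e1] at h
        linarith [mul_pos h3 hS]
      · rw [Set.mem_ofPred_eq, e2] at h
        linarith [mul_pos (by linarith : 0 < 1 - p.re - p.im) hS]
      · rw [Set.mem_ofPred_eq, e3] at h
        linarith [mul_pos h1 hS]
  refine le_trans (le_of_eq ?_) (measure_mono hsub)
  rw [Set.image_add_left, measure_preimage_add, Measure.addHaar_image_linearMap, det_frameMap,
    volume_stdTriangle, ← ENNReal.ofReal_mul (abs_nonneg _), abs_of_pos hS]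
  congr 1; ring

/-- The elementary inequality behind the three-point case; `S / 2` is the area of the triangle with
sides `u`, `v`, `w`. -/
lemma sides_ineq {R u v w S : ℝ} (hR : 0 < R) (hu : 0 ≤ u) (hv : 0 ≤ v) (hw : 0 ≤ w)
    (hu2 : u ≤ 2 * R) (hv2 : v ≤ 2 * R) (hw2 : w ≤ 2 * R) (hS : 0 ≤ S)
    (h : (u * v * w) ^ 2 = (4 * R * (S / 2)) ^ 2) : R * (u + v + w) ≤ 4 * R ^ 2 + S / 2 := by
  have h' : u * v * w = 4 * R * (S / 2) := by
    rwa [sq_eq_sq₀ (by positivity) (by positivity)] at h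
  have k1 := mul_nonneg (sub_nonneg.2 hw2) (by linarith : 0 ≤ 4 * R - u - v)
  have k2 := mul_nonneg hw (mul_nonneg (sub_nonneg.2 hu2) (sub_nonneg.2 hv2))
  have k3 : 4 * R * (R * (u + v + w)) ≤ 4 * R * (4 * R ^ 2 + S / 2) := by
    have := mul_nonneg hR.le k1
    linarith
  exact le_of_mul_le_mul_left k3 (by positivity)

/-- Favard's inequality when `K` contains the vertices of a triangle inscribed in the circle with the
centre inside: the triangle cuts `K` into three caps and itself. -/
lemma favard_three {K : Set ℂ} (hK : IsCompact K) (hconv : Convex ℝ K)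
    (hint : (interior K).Nonempty) {R : ℝ} {a b c : ℂ} (hR : 0 < R) (hKR : ∀ p ∈ K, ‖p‖ ≤ R)
    (ha : a ∈ K) (hb : b ∈ K) (hc : c ∈ K) (haR : ‖a‖ = R) (hbR : ‖b‖ = R) (hcR : ‖c‖ = R)
    (hab : 0 < cr a b) (hbc : 0 < cr b c) (hca : 0 < cr c a) :
    R * (μH[1] (frontier K)).toReal ≤ 4 * R ^ 2 + (volume K).toReal := by
  have hne : ∀ {x y : ℂ}, 0 < cr x y → x ≠ y := by
    rintro x y h rfl; unfold cr at h; linarith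
  have b1 := cap_bound hK hconv hR hKR ha hb haR hbR (hne hab) hab.le
  have b2 := cap_bound hK hconv hR hKR hb hc hbR hcR (hne hbc) hbc.le
  have b3 := cap_bound hK hconv hR hKR hc ha hcR haR (hne hca) hca.le
  have hfin : ∀ x y, volume (cap K x y) ≠ ⊤ := fun x y =>
    ((measure_mono cap_subset).trans_lt hK.measure_lt_top).ne
  have hnn : ∀ x y, 0 ≤ (‖y - x‖ * R + (volume (cap K x y)).toReal) / R := fun x y => by
    positivity
  have hP : μH[1] (frontier K) ≤ _ := (measure_mono
    (frontier_subset_three hK hconv hint hKR ha hb hc haR hbR hcR hab hbc hca)).trans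
    ((measure_union_le _ _).trans (add_le_add ((measure_union_le _ _).trans (add_le_add b1 b2)) b3))
  rw [← ENNReal.ofReal_add (hnn _ _) (hnn _ _),
    ← ENNReal.ofReal_add (add_nonneg (hnn _ _) (hnn _ _)) (hnn _ _)] at hP
  have hP' := ENNReal.toReal_le_of_le_ofReal
    (add_nonneg (add_nonneg (hnn _ _) (hnn _ _)) (hnn _ _)) hP
  have s1 : cr (b - a) (c - b) = cr a b + cr b c + cr c a := by unfold cr; simp; ring
  have s2 : cr (c - b) (a - c) = cr a b + cr b c + cr c a := by unfold cr; simp; ring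
  have s3 : cr (a - c) (b - a) = cr a b + cr b c + cr c a := by unfold cr; simp; ring
  have s4 : cr (b - a) (c - a) = cr a b + cr b c + cr c a := by unfold cr; simp; ring
  obtain ⟨S, hSdef⟩ : ∃ S, S = cr a b + cr b c + cr c a := ⟨_, rfl⟩
  have hS : 0 < S := by linarith
  rw [← hSdef] at s1 s2 s3 s4
  have d1 := cap_disjoint hKR haR hbR hcR (hne hab) (s1 ▸ hS)
  have d2 := cap_disjoint hKR hbR hcR haR (hne hbc) (s2 ▸ hS)
  have d3 := cap_disjoint hKR hcR haR hbR (hne hca) (s3 ▸ hS)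
  have m1 := measurableSet_cap hK a b
  have m2 := measurableSet_cap hK b c
  have m3 := measurableSet_cap hK c a
  have hvol : S / 2 + ((volume (cap K a b)).toReal + (volume (cap K b c)).toReal +
      (volume (cap K c a)).toReal) ≤ (volume K).toReal := by
    have ht := triangle_volume_le hconv ha hb hc (s4 ▸ hS)
    have hsub : cap K a b ∪ cap K b c ∪ cap K c a ⊆ K :=
      Set.union_subset (Set.union_subset cap_subset cap_subset) cap_subset
    have hu : volume (cap K a b ∪ cap K b c ∪ cap K c a) =
        volume (cap K a b) + volume (cap K b c) + volume (cap K c a) := by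
      rw [measure_union (Set.disjoint_union_left.2 ⟨d3.symm, d2⟩) m3, measure_union d1 m2]
    have hd := measure_sdiff_add_inter (μ := volume) K ((m1.union m2).union m3)
    rw [Set.inter_eq_right.2 hsub, hu] at hd
    have h := add_le_add_left ht (volume (cap K a b) + volume (cap K b c) + volume (cap K c a))
    rw [hd] at h
    have h' := ENNReal.toReal_mono hK.measure_lt_top.ne h
    rwa [ENNReal.toReal_add ENNReal.ofReal_ne_top (ENNReal.add_ne_top.2
      ⟨ENNReal.add_ne_top.2 ⟨hfin _ _, hfin _ _⟩, hfin _ _⟩),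
      ENNReal.toReal_add (ENNReal.add_ne_top.2 ⟨hfin _ _, hfin _ _⟩) (hfin _ _),
      ENNReal.toReal_add (hfin _ _) (hfin _ _), s4,
      ENNReal.toReal_ofReal (by linarith)] at h'
  rw [← add_div, ← add_div, le_div_iff₀ hR] at hP'
  have hprod := prod_sides_sq haR hbR hcR
  have s5 : (b.re - a.re) * (c.im - a.im) - (b.im - a.im) * (c.re - a.re) = S := by
    rw [← s4]; simp [cr]
  rw [s5] at hprod
  have hsides := sides_ineq hR (norm_nonneg (a - b)) (norm_nonneg (b - c)) (norm_nonneg (a - c))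
    (norm_sub_le_two hbR haR) (norm_sub_le_two hcR hbR) (norm_sub_le_two hcR haR) hS.le hprod
  rw [norm_sub_rev b a, norm_sub_rev c b] at hP'
  linarith

/-! ### Contact points with the circumcircle -/

/-- Convex combinations of three points of `C`, as the image of a compact set when `C` is compact. -/
def hullThree (C : Set ℂ) : Set ℂ :=
  (fun x : (Fin 3 → ℝ) × (Fin 3 → ℂ) => ∑ i, x.1 i • x.2 i) ''
    (stdSimplex ℝ (Fin 3) ×ˢ Set.univ.pi fun _ => C)

lemma isCompact_hullThree {C : Set ℂ} (hC : IsCompact C) : IsCompact (hullThree C) := by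
  refine ((isCompact_stdSimplex ℝ (Fin 3)).prod (isCompact_univ_pi fun _ => hC)).image ?_
  fun_prop

/-- Carathéodory's theorem in the plane. Combinations of fewer points are padded with weights `0`. -/
lemma hullThree_eq (C : Set ℂ) : hullThree C = convexHull ℝ C := by
  refine Set.Subset.antisymm ?_ ?_
  · rintro _ ⟨⟨w, z⟩, ⟨hw, hz⟩, rfl⟩
    exact (convex_convexHull ℝ C).sum_mem (fun i _ => hw.1 i) hw.2
      (fun i _ => subset_convexHull ℝ C (hz i trivial))
  · intro x hx
    obtain ⟨ι, _, z, w, hz, hind, hw, hsum, hx⟩ := eq_pos_convex_span_of_mem_convexHull hx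
    have hcard : Fintype.card ι ≤ Fintype.card (Fin 3) := by
      have h1 := hind.card_le_finrank_succ
      have h2 := Submodule.finrank_le (vectorSpan ℝ (Set.range z))
      rw [Complex.finrank_real_complex] at h2
      rw [Fintype.card_fin]; omega
    obtain ⟨g⟩ := Function.Embedding.nonempty_of_card_le hcard
    have hne : Nonempty ι := by
      by_contra h
      rw [not_nonempty_iff] at h
      simp at hsum
    obtain ⟨i₀⟩ := hne
    have hw0 : ∀ j ∉ Set.range g, Function.extend g w 0 j = 0 := fun j hj =>
      Function.extend_apply' _ _ _ hj
    refine ⟨⟨Function.extend g w 0, Function.extend g z fun _ => z i₀⟩, ⟨⟨?_, ?_⟩, ?_⟩, ?_⟩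
    · intro j
      change 0 ≤ Function.extend g w 0 j
      by_cases hj : ∃ i, g i = j
      · obtain ⟨i, rfl⟩ := hj
        rw [g.injective.extend_apply]; exact (hw i).le
      · rw [hw0 j hj]
    · rw [← hsum]
      exact (Fintype.sum_of_injective g g.injective _ _ hw0
        fun i => (g.injective.extend_apply _ _ _).symm).symm
    · intro j _
      by_cases hj : ∃ i, g i = j
      · obtain ⟨i, rfl⟩ := hj
        simp only [g.injective.extend_apply]; exact hz ⟨i, rfl⟩
      · simp only [Function.extend_apply' _ _ _ hj]; exact hz ⟨i₀, rfl⟩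
    · rw [← hx]
      refine (Fintype.sum_of_injective g g.injective _ _ ?_ ?_).symm
      · intro j hj; dsimp only; rw [hw0 j hj, zero_smul]
      · intro i; simp only [g.injective.extend_apply]

/-- If the disk of radius `R` about the origin cannot be replaced by a smaller one, the origin is in
the convex hull of the points of `K` on the circle. Otherwise a line strictly separates it from them,
and shifting the centre towards them shrinks the disk. -/
lemma zero_mem_hull {K : Set ℂ} (hK : IsCompact K) {R : ℝ} (hR : 0 < R)
    (hKR : ∀ p ∈ K, ‖p‖ ≤ R)
    (hmin : ∀ (x : ℂ) (r : ℝ), 0 ≤ r → (∀ p ∈ K, ‖p - x‖ ≤ r) → R ≤ r) :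
    (0 : ℂ) ∈ hullThree (K ∩ {p | ‖p‖ = R}) := by
  by_contra h0
  have hcl : IsClosed {p : ℂ | ‖p‖ = R} := isClosed_eq continuous_norm continuous_const
  have hcomp := isCompact_hullThree (hK.inter_right hcl)
  have hcv : Convex ℝ (hullThree (K ∩ {p | ‖p‖ = R})) := by
    rw [hullThree_eq]; exact convex_convexHull _ _
  obtain ⟨f, u, hu, hf⟩ := geometric_hahn_banach_point_closed hcv hcomp.isClosed h0
  rw [map_zero] at hu
  have hexp : ∀ q, f q = f 1 * q.re + f Complex.I * q.im := by
    intro q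
    have : q = q.re • (1 : ℂ) + q.im • Complex.I := by apply Complex.ext <;> simp
    conv_lhs => rw [this]
    rw [map_add, map_smul, map_smul, smul_eq_mul, smul_eq_mul]; ring
  obtain ⟨v, hv⟩ : ∃ v : ℂ, v = ⟨f 1, f Complex.I⟩ := ⟨_, rfl⟩
  have hfC : ∀ q ∈ K, ‖q‖ = R → u < f q := fun q hq hqR => by
    refine hf q ?_
    rw [hullThree_eq]
    exact subset_convexHull ℝ _ ⟨hq, hqR⟩
  -- The points with `f q ≤ u` stay uniformly away from the circle.
  have hK1 : IsCompact (K ∩ {q | f q ≤ u}) :=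
    hK.inter_right (isClosed_le f.continuous continuous_const)
  obtain ⟨ρ, hρ0, hρR, hρ⟩ : ∃ ρ, 0 ≤ ρ ∧ ρ < R ∧ ∀ q ∈ K, f q ≤ u → ‖q‖ ≤ ρ := by
    rcases (K ∩ {q | f q ≤ u}).eq_empty_or_nonempty with he | hne
    · refine ⟨0, le_rfl, hR, fun q hq hfq => ?_⟩
      have : q ∈ K ∩ {q | f q ≤ u} := ⟨hq, hfq⟩
      rw [he] at this
      exact absurd this (Set.notMem_empty q)
    · obtain ⟨q, ⟨hq, hfq⟩, hmax⟩ := hK1.exists_isMaxOn hne continuous_norm.continuousOn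
      refine ⟨‖q‖, norm_nonneg _, lt_of_le_of_ne (hKR q hq) ?_, fun p hp hfp => hmax ⟨hp, hfp⟩⟩
      intro h
      exact absurd (hfC q hq h) (not_lt.2 hfq)
  -- A small shift of the centre in the direction `v` allows a smaller radius.
  obtain ⟨V, hV⟩ : ∃ V, V = ‖v‖ := ⟨_, rfl⟩
  have hV0 : 0 ≤ V := hV ▸ norm_nonneg _
  obtain ⟨ε, hε⟩ : ∃ ε, ε = min (u / (V ^ 2 + 1)) ((R - ρ) / (2 * (V + 1))) := ⟨_, rfl⟩
  have hε0 : 0 < ε := by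
    rw [hε]; refine lt_min (by positivity) (div_pos (by linarith) (by positivity))
  have hε1 : ε * (V ^ 2 + 1) ≤ u := by
    rw [← le_div_iff₀ (by positivity), hε]; exact min_le_left _ _
  have hε2 : ε * (2 * (V + 1)) ≤ R - ρ := by
    rw [← le_div_iff₀ (by positivity), hε]; exact min_le_right _ _
  have hεu : 0 < ε * u := mul_pos hε0 hu
  have hεV : 0 ≤ ε * V := mul_nonneg hε0.le hV0
  have hlt : max (ρ + ε * V) (Real.sqrt (R ^ 2 - ε * u)) < R := by
    refine max_lt (by linarith) ?_
    rw [Real.sqrt_lt' hR]; linarith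
  refine absurd (hmin (ε * v) _ (le_max_of_le_left (by linarith)) ?_) (not_le.2 hlt)
  intro q hq
  rcases le_or_gt (f q) u with hfq | hfq
  · refine le_max_of_le_left ?_
    have h1 := norm_sub_le q (ε * v)
    rw [norm_mul, Complex.norm_real, Real.norm_eq_abs, abs_of_pos hε0, ← hV] at h1
    linarith [hρ q hq hfq]
  · refine le_max_of_le_right (Real.le_sqrt_of_sq_le ?_)
    have h1 := normSq_re_im (q - ε * v)
    have h2 := normSq_re_im q
    have h3 := normSq_re_im v
    have h4 := pow_le_pow_left₀ (norm_nonneg _) (hKR q hq) 2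
    have hfq' : f q = v.re * q.re + v.im * q.im := by rw [hexp q, hv]
    have hre : (q - ε * v).re = q.re - ε * v.re := by simp
    have him : (q - ε * v).im = q.im - ε * v.im := by simp
    rw [h1, hre, him]
    rw [← hV] at h3
    have h5 := mul_lt_mul_of_pos_left hfq hε0
    rw [hfq'] at h5
    have h6 := mul_le_mul_of_nonneg_left hε1 hε0.le
    nlinarith [sq_nonneg ε]

/-- Two points of the circle with the centre on the segment between them are antipodal. -/
lemma antipodal_of_two {R x y : ℝ} {a b : ℂ} (hR : 0 < R) (ha : ‖a‖ = R) (hb : ‖b‖ = R)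
    (hx : 0 ≤ x) (hy : 0 ≤ y) (hxy : x + y = 1) (h : x • a + y • b = 0) : b = -a := by
  have h1 : x • a = -(y • b) := eq_neg_of_add_eq_zero_left h
  have h2 := congrArg norm h1
  rw [norm_neg, norm_smul, norm_smul, ha, hb, Real.norm_eq_abs, Real.norm_eq_abs, abs_of_nonneg hx,
    abs_of_nonneg hy] at h2
  have h3 : x = y := mul_right_cancel₀ hR.ne' h2
  have h4 : x = 1 / 2 := by linarith
  rw [← h3, ← smul_add] at h
  rcases smul_eq_zero.1 h with h | h
  · rw [h4] at h; norm_num at h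
  · exact eq_neg_of_add_eq_zero_right h

/-- Two points of the circle on a line through the centre are equal or antipodal. -/
lemma eq_or_neg_of_cr {R : ℝ} {a b : ℂ} (ha : ‖a‖ = R) (hb : ‖b‖ = R)
    (h : cr a b = 0) : b = a ∨ b = -a := by
  have na := normSq_re_im a
  have nb := normSq_re_im b
  rw [ha] at na
  rw [hb] at nb
  unfold cr at h
  have hp : (a.re * b.re + a.im * b.im - R ^ 2) * (a.re * b.re + a.im * b.im + R ^ 2) = 0 := by
    have : (a.re * b.re + a.im * b.im) ^ 2 + (a.re * b.im - a.im * b.re) ^ 2 =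
      (a.re ^ 2 + a.im ^ 2) * (b.re ^ 2 + b.im ^ 2) := by ring
    rw [h, ← na, ← nb] at this
    linarith
  rcases mul_eq_zero.1 hp with h1 | h1
  · left
    have h2 : (b.re - a.re) ^ 2 + (b.im - a.im) ^ 2 = 0 := by linarith
    have h3 : (b.re - a.re) ^ 2 = 0 := by linarith [sq_nonneg (b.re - a.re), sq_nonneg (b.im - a.im)]
    have h4 : (b.im - a.im) ^ 2 = 0 := by linarith
    exact Complex.ext (sub_eq_zero.1 (pow_eq_zero_iff two_ne_zero |>.1 h3))
      (sub_eq_zero.1 (pow_eq_zero_iff two_ne_zero |>.1 h4))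
  · right
    have h2 : (b.re + a.re) ^ 2 + (b.im + a.im) ^ 2 = 0 := by linarith
    have h3 : (b.re + a.re) ^ 2 = 0 := by linarith [sq_nonneg (b.re + a.re), sq_nonneg (b.im + a.im)]
    have h4 : (b.im + a.im) ^ 2 = 0 := by linarith
    exact Complex.ext (eq_neg_of_add_eq_zero_left (pow_eq_zero_iff two_ne_zero |>.1 h3))
      (eq_neg_of_add_eq_zero_left (pow_eq_zero_iff two_ne_zero |>.1 h4))

/-- If the centre of a circle is in the convex hull of `C ⊆` the circle, then either `C` contains
two antipodal points, or it contains a positively oriented triangle around the centre. -/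
lemma exists_contact {C : Set ℂ} {R : ℝ} (hR : 0 < R) (hC : ∀ p ∈ C, ‖p‖ = R)
    (h : (0 : ℂ) ∈ hullThree C) :
    (∃ s ∈ C, -s ∈ C) ∨
      ∃ a ∈ C, ∃ b ∈ C, ∃ c ∈ C, 0 < cr a b ∧ 0 < cr b c ∧ 0 < cr c a := by
  obtain ⟨⟨w, z⟩, ⟨⟨hw, hsum⟩, hz⟩, h⟩ := h
  have z0 : z 0 ∈ C := hz 0 trivial
  have z1 : z 1 ∈ C := hz 1 trivial
  have z2 : z 2 ∈ C := hz 2 trivial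
  have w0 : 0 ≤ w 0 := hw 0
  have w1 : 0 ≤ w 1 := hw 1
  have w2 : 0 ≤ w 2 := hw 2
  simp only [Fin.sum_univ_three] at hsum h
  generalize z 0 = a at *
  generalize z 1 = b at *
  generalize z 2 = c at *
  generalize w 0 = x at *
  generalize w 1 = y at *
  generalize w 2 = t at *
  have na := hC a z0
  have nb := hC b z1
  have nc := hC c z2
  have hre : x * a.re + y * b.re + t * c.re = 0 := by simpa using congrArg Complex.re h
  have him : x * a.im + y * b.im + t * c.im = 0 := by simpa using congrArg Complex.im h
  by_cases hanti : ∃ s ∈ C, -s ∈ C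
  · exact Or.inl hanti
  right
  have hno : ∀ p ∈ C, ∀ q ∈ C, q ≠ -p := by
    rintro p hp q hq rfl
    exact hanti ⟨p, hp, hq⟩
  have hx : 0 < x := by
    refine lt_of_le_of_ne w0 fun hx => ?_
    rw [← hx, zero_smul, zero_add] at h
    exact hno b z1 c z2 (antipodal_of_two hR nb nc w1 w2 (by linarith) h)
  have hy : 0 < y := by
    refine lt_of_le_of_ne w1 fun hy => ?_
    rw [← hy, zero_smul, add_zero] at h
    exact hno a z0 c z2 (antipodal_of_two hR na nc w0 w2 (by linarith) h)
  have ht : 0 < t := by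
    refine lt_of_le_of_ne w2 fun ht => ?_
    rw [← ht, zero_smul, add_zero] at h
    exact hno a z0 b z1 (antipodal_of_two hR na nb w0 w1 (by linarith) h)
  have k1 : y * cr a b = t * cr c a := by
    unfold cr; linear_combination a.re * him - a.im * hre
  have k2 : t * cr b c = x * cr a b := by
    unfold cr; linear_combination b.re * him - b.im * hre
  have hcr_neg : ∀ p q, cr q p = -cr p q := fun p q => by unfold cr; ring
  rcases lt_trichotomy (cr a b) 0 with hab | hab | hab
  · have hca : cr c a < 0 := by
      have := mul_neg_of_pos_of_neg hy hab
      rw [k1] at this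
      exact (pos_iff_neg_of_mul_neg this).1 ht
    have hbc : cr b c < 0 := by
      have := mul_neg_of_pos_of_neg hx hab
      rw [← k2] at this
      exact (pos_iff_neg_of_mul_neg this).1 ht
    refine ⟨a, z0, c, z2, b, z1, ?_, ?_, ?_⟩ <;> rw [hcr_neg] <;> linarith
  · exfalso
    rw [hab, mul_zero] at k1 k2
    have hca := (mul_eq_zero.1 k1.symm).resolve_left ht.ne'
    have e1 := (eq_or_neg_of_cr na nb hab).resolve_right (hno a z0 b z1)
    have e2 := (eq_or_neg_of_cr nc na hca).resolve_right (hno c z2 a z0)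
    rw [e1, ← e2, ← add_smul, ← add_smul, hsum, one_smul] at h
    rw [h, norm_zero] at na
    exact hR.ne na
  · have hca : 0 < cr c a := by
      have := mul_pos hy hab
      rw [k1] at this
      exact (pos_iff_pos_of_mul_pos this).1 ht
    have hbc : 0 < cr b c := by
      have := mul_pos hx hab
      rw [← k2] at this
      exact (pos_iff_pos_of_mul_pos this).1 ht
    exact ⟨a, z0, b, z1, c, z2, hab, hbc, hca⟩

/-- Favard's inequality for a set whose smallest enclosing disk is centred at the origin. -/
lemma favard_centered {K : Set ℂ} (hK : IsCompact K) (hconv : Convex ℝ K)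
    (hint : (interior K).Nonempty) {R : ℝ} (hR : 0 < R) (hKR : ∀ p ∈ K, ‖p‖ ≤ R)
    (hmin : ∀ (x : ℂ) (r : ℝ), 0 ≤ r → (∀ p ∈ K, ‖p - x‖ ≤ r) → R ≤ r) :
    R * (μH[1] (frontier K)).toReal ≤ 4 * R ^ 2 + (volume K).toReal := by
  rcases exists_contact hR (fun p hp => hp.2) (zero_mem_hull hK hR hKR hmin) with
    ⟨s, ⟨hs, hsR⟩, ⟨hs', hsR'⟩⟩ | ⟨a, ⟨ha, haR⟩, b, ⟨hb, hbR⟩, c, ⟨hc, hcR⟩, hab, hbc, hca⟩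
  · refine favard_two hK hconv hint hR hKR hs hs' hsR hsR' ?_ (by unfold cr; simp; ring)
    intro h
    have h0 : s = 0 := self_eq_neg.1 h
    have : ‖s‖ = R := hsR
    rw [h0, norm_zero] at this
    exact hR.ne this
  · exact favard_three hK hconv hint hR hKR ha hb hc haR hbR hcR hab hbc hca

/-! ### The Euclidean plane -/

/-- The infimum defining the circumradius is attained. -/
lemma exists_circumcentre {Ω : Set (EuclideanSpace ℝ (Fin 2))} (hc : IsCompact Ω)
    (hne : Ω.Nonempty) : ∃ O, Ω ⊆ Metric.closedBall O (circumradius Ω) := by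
  have hS : {r : ℝ | 0 ≤ r ∧ ∃ x, Ω ⊆ Metric.closedBall x r}.Nonempty := by
    obtain ⟨r, hr⟩ := hc.isBounded.subset_closedBall 0
    exact ⟨max r 0, le_max_right _ _, 0,
      hr.trans (Metric.closedBall_subset_closedBall (le_max_left _ _))⟩
  obtain ⟨p₀, hp₀⟩ := hne
  let F : ℕ → Set (EuclideanSpace ℝ (Fin 2)) := fun n =>
    ⋂ p ∈ Ω, Metric.closedBall p (circumradius Ω + 1 / ((n : ℝ) + 1))
  have hFcl : ∀ n, IsClosed (F n) := fun n => isClosed_biInter fun _ _ => Metric.isClosed_closedBall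
  have hF : (⋂ n, F n).Nonempty := by
    refine IsCompact.nonempty_iInter_of_sequence_nonempty_isCompact_isClosed F ?_ ?_ ?_ hFcl
    · intro n
      refine Set.biInter_mono subset_rfl fun p _ => Metric.closedBall_subset_closedBall ?_
      have h : 1 / ((n : ℝ) + 1 + 1) ≤ 1 / ((n : ℝ) + 1) :=
        one_div_le_one_div_of_le (by positivity) (by linarith)
      push_cast
      linarith
    · intro n
      have hlt : sInf {r : ℝ | 0 ≤ r ∧ ∃ x, Ω ⊆ Metric.closedBall x r} <
          circumradius Ω + 1 / ((n : ℝ) + 1) := lt_add_of_pos_right _ (by positivity)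
      obtain ⟨r, ⟨-, x, hx⟩, hr⟩ := exists_lt_of_csInf_lt hS hlt
      refine ⟨x, Set.mem_iInter₂.2 fun p hp => ?_⟩
      have := Metric.mem_closedBall'.1 (hx hp)
      exact Metric.mem_closedBall.2 (this.trans hr.le)
    · exact (isCompact_closedBall p₀ _).of_isClosed_subset (hFcl 0)
        (Set.biInter_subset_of_mem hp₀)
  obtain ⟨O, hO⟩ := hF
  refine ⟨O, fun p hp => Metric.mem_closedBall'.2 ?_⟩
  refine le_of_forall_pos_le_add fun ε hε => ?_
  obtain ⟨n, hn⟩ := exists_nat_one_div_lt hε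
  have := Metric.mem_closedBall.1 (Set.mem_iInter₂.1 (Set.mem_iInter.1 hO n) p hp)
  linarith

theorem favard_inequality (Ω : Set (EuclideanSpace ℝ (Fin 2)))
    (hc : IsCompact Ω) (hconv : Convex ℝ Ω) (hne : Ω.Nonempty)
    (hint : (interior Ω).Nonempty) :
    area Ω ≥ circumradius Ω * (perim Ω - 4 * circumradius Ω) := by
  obtain ⟨O, hO⟩ := exists_circumcentre hc hne
  have hR0 : 0 ≤ circumradius Ω := Real.sInf_nonneg fun r hr => hr.1
  -- An isometry onto `ℂ` which takes the circumcentre to the origin.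
  let L : EuclideanSpace ℝ (Fin 2) ≃ₗᵢ[ℝ] ℂ := Complex.orthonormalBasisOneI.repr.symm
  let e : EuclideanSpace ℝ (Fin 2) ≃ᵢ ℂ := (IsometryEquiv.addLeft (-O)).trans L.toIsometryEquiv
  have he : ∀ p, e p = L (-O + p) := fun p => rfl
  have hnorm : ∀ p q, ‖e p - e q‖ = dist p q := fun p q => by
    rw [← dist_eq_norm, e.isometry.dist_eq]
  have heO : e O = 0 := by rw [he, neg_add_cancel, map_zero]
  have himg : e '' Ω = L '' ((fun p => -O + p) '' Ω) := by
    rw [Set.image_image]; rfl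
  have hK : IsCompact (e '' Ω) := hc.image e.continuous
  have hKc : Convex ℝ (e '' Ω) := by
    rw [himg]
    exact (hconv.translate (-O)).linear_image L.toLinearEquiv.toLinearMap
  have hKi : (interior (e '' Ω)).Nonempty := by
    have h := e.toHomeomorph.image_interior Ω
    rw [IsometryEquiv.coe_toHomeomorph] at h
    rw [← h]
    exact hint.image _
  have hKR : ∀ p ∈ e '' Ω, ‖p‖ ≤ circumradius Ω := by
    rintro _ ⟨p, hp, rfl⟩
    have h := hnorm p O
    rw [heO, sub_zero] at h
    rw [h]
    exact hO hp
  have hR : 0 < circumradius Ω := by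
    refine lt_of_le_of_ne hR0 fun h => ?_
    have hsub : e '' Ω ⊆ {0} := fun p hp => by
      have := hKR p hp
      rw [← h] at this
      exact norm_le_zero_iff.1 this
    have := hKi.mono (interior_mono hsub)
    rw [interior_singleton] at this
    exact Set.not_nonempty_empty this
  have hmin : ∀ (x : ℂ) (r : ℝ), 0 ≤ r → (∀ p ∈ e '' Ω, ‖p - x‖ ≤ r) → circumradius Ω ≤ r := by
    intro x r hr h
    refine csInf_le ⟨0, fun s hs => hs.1⟩ ⟨hr, e.symm x, fun p hp => ?_⟩
    have h1 := h (e p) ⟨p, hp, rfl⟩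
    rw [Metric.mem_closedBall, ← hnorm, e.apply_symm_apply]
    exact h1
  have hper : μH[1] (frontier (e '' Ω)) = μH[1] (frontier Ω) := by
    have h := e.toHomeomorph.image_frontier Ω
    rw [IsometryEquiv.coe_toHomeomorph] at h
    rw [← h, e.hausdorffMeasure_image]
  have harea : volume (e '' Ω) = volume Ω := by
    have hpre : e '' Ω = L.symm ⁻¹' ((fun p => -O + p) '' Ω) := by
      rw [himg]
      exact L.toEquiv.image_eq_preimage_symm _
    rw [hpre, (L.symm.measurePreserving).measure_preimage_emb
      L.symm.toHomeomorph.toMeasurableEquiv.measurableEmbedding, Set.image_add_left,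
      measure_preimage_add]
  have h := favard_centered hK hKc hKi hR hKR hmin
  rw [hper, harea] at h
  unfold area perim
  linarith
end

section
/- For every bounded convex body Ω in the plane with circumradius R(Ω), one has |Ω| ≥ R(Ω)·(2·P(Ω) − 3π·R(Ω)), with equality when Ω is a disk. -/
/-!
Let `Ω` lie in a closed disc `B` of radius `r` centred at `c`, with support function `h(θ)` measured
from `c`. If `p = h'` denotes the tangential coordinate of the contact point at angle `θ`, then
`h² + p² ≤ r²` because the contact point lies in `B`. Two integral bounds give the inequality:

* `P(Ω) ≤ ∫ h dθ`;
* `|B \ Ω| ≤ ½ ∫ (√(r² - h²) ∓ p)² dθ`, since `B \ Ω` is swept out by the forward (resp. backward)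
  half tangents of `Ω`, whose length inside `B` is `√(r² - h²) ∓ p`. Averaging the two versions,
  `|B \ Ω| ≤ ½ ∫ (r² - h² + p²) dθ ≤ ∫ (r² - h²) dθ`.

Hence `2 r P(Ω) + |B \ Ω| ≤ ∫ (2 r h + r² - h²) dθ ≤ ∫ 2 r² dθ = 4 π r²`, which is
`|Ω| ≥ r (2 P(Ω) - 3 π r)`. Applied to all discs containing `Ω`, it passes to the circumradius
by continuity in `r`.

Both bounds are upper bounds of measures, so no smoothness of `∂Ω` is needed: they are proved by
finite coverings attached to the angles `k π / M`, `k < 2 M`, with an error that vanishes as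
`M → ∞` (`discrete_estimate`, `tendsto_error`). The frontier is covered by the arcs whose outer
normals lie in one angular step; each is a Lipschitz graph over its tangential projection
(`hausdorffMeasure_arc_le`). The set `B \ Ω` is covered by thin circular sectors with apex at the
contact points (`diff_subset_iUnion_tangentSector`, `volume_tangentSector_le`).

For a disc, the inequality itself gives `P ≤ 2 π r`, so equality only needs `P ≥ 2 π r`; that comes
from projecting short arcs of the circle onto their tangents (`le_hausdorffMeasure_circle_arc`).
-/

open MeasureTheory

/-! ### Rotating frames -/

/-- The Euclidean plane. -/
abbrev Plane := EuclideanSpace ℝ (Fin 2)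

/-- The normal coordinate `⟨x, n_θ⟩`, where `n_θ = (cos θ, sin θ)`. -/
noncomputable def nc (θ : ℝ) (x : Plane) : ℝ := Real.cos θ * x 0 + Real.sin θ * x 1
/-- The tangential coordinate `⟨x, τ_θ⟩`, where `τ_θ = (-sin θ, cos θ)`. -/
noncomputable def tc (θ : ℝ) (x : Plane) : ℝ := -Real.sin θ * x 0 + Real.cos θ * x 1

lemma nc_sub (θ : ℝ) (x y : Plane) : nc θ (x - y) = nc θ x - nc θ y := by
  simp [nc]; ring
lemma tc_sub (θ : ℝ) (x y : Plane) : tc θ (x - y) = tc θ x - tc θ y := by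
  simp [tc]; ring
lemma nc_add (θ α : ℝ) (x : Plane) :
    nc (θ + α) x = Real.cos α * nc θ x + Real.sin α * tc θ x := by
  simp only [nc, tc, Real.cos_add, Real.sin_add]; ring
lemma tc_add (θ α : ℝ) (x : Plane) :
    tc (θ + α) x = Real.cos α * tc θ x - Real.sin α * nc θ x := by
  simp only [nc, tc, Real.cos_add, Real.sin_add]; ring
lemma norm_sq_eq_nc_tc (θ : ℝ) (x : Plane) : ‖x‖ ^ 2 = nc θ x ^ 2 + tc θ x ^ 2 := by
  rw [EuclideanSpace.norm_sq_eq, Fin.sum_univ_two]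
  simp only [Real.norm_eq_abs, sq_abs, nc, tc]
  linear_combination (- (x 0) ^ 2 - (x 1) ^ 2) * Real.sin_sq_add_cos_sq θ
lemma continuous_nc (θ : ℝ) : Continuous (nc θ) := by unfold nc; fun_prop
lemma continuous_tc (θ : ℝ) : Continuous (tc θ) := by unfold tc; fun_prop
lemma nc_periodic (x : Plane) : Function.Periodic (fun θ => nc θ x) (2 * Real.pi) := by
  intro θ; simp [nc]
lemma tc_periodic (x : Plane) : Function.Periodic (fun θ => tc θ x) (2 * Real.pi) := by
  intro θ; simp [tc]
lemma eq_of_nc_tc {θ : ℝ} {x y : Plane} (h1 : nc θ x = nc θ y) (h2 : tc θ x = tc θ y) : x = y := by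
  have := norm_sq_eq_nc_tc θ (x - y)
  rw [nc_sub, tc_sub, h1, h2] at this
  simpa [sub_eq_zero] using this

lemma abs_nc_le (θ : ℝ) {x : Plane} {r : ℝ} (hx : ‖x‖ ≤ r) : |nc θ x| ≤ r := by
  apply abs_le_of_sq_le_sq _ ((norm_nonneg x).trans hx)
  nlinarith [norm_sq_eq_nc_tc θ x, norm_nonneg x, sq_nonneg (tc θ x)]
lemma abs_tc_le (θ : ℝ) {x : Plane} {r : ℝ} (hx : ‖x‖ ≤ r) : |tc θ x| ≤ r := by
  apply abs_le_of_sq_le_sq _ ((norm_nonneg x).trans hx)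
  nlinarith [norm_sq_eq_nc_tc θ x, norm_nonneg x, sq_nonneg (nc θ x)]

lemma exists_eq_mul_nc (f : Plane →L[ℝ] ℝ) : ∃ ρ : ℝ, 0 ≤ ρ ∧ ∃ β, ∀ x, f x = ρ * nc β x := by
  set a := f (EuclideanSpace.single 0 1)
  set b := f (EuclideanSpace.single 1 1)
  refine ⟨‖(⟨a, b⟩ : ℂ)‖, norm_nonneg _, Complex.arg ⟨a, b⟩, fun x => ?_⟩
  have hx : x = x 0 • EuclideanSpace.single 0 1 + x 1 • EuclideanSpace.single 1 1 := by
    ext i; fin_cases i <;> simp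
  have h1 := Complex.norm_mul_cos_arg (⟨a, b⟩ : ℂ)
  have h2 := Complex.norm_mul_sin_arg (⟨a, b⟩ : ℂ)
  simp only at h1 h2
  conv_lhs => rw [hx]
  rw [map_add, map_smul, map_smul]
  simp only [nc, smul_eq_mul]
  change x 0 * a + x 1 * b = _
  linear_combination (- x 0) * h1 - x 1 * h2

/-! ### Contact points and arcs of the frontier -/

/-- `p` is the last point, in the direction `τ_θ`, of the face of `Ω` with outer normal `n_θ`.
Taking the last point makes it unique, hence `2π`-periodic in `θ`. -/
def IsExtremeContact (Ω : Set Plane) (θ : ℝ) (p : Plane) : Prop :=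
  p ∈ Ω ∧ (∀ y ∈ Ω, nc θ y ≤ nc θ p) ∧ ∀ y ∈ Ω, nc θ y = nc θ p → tc θ y ≤ tc θ p

lemma exists_isExtremeContact {Ω : Set Plane} (hc : IsCompact Ω) (hne : Ω.Nonempty) (θ : ℝ) :
    ∃ p, IsExtremeContact Ω θ p := by
  obtain ⟨q, hq, hqm⟩ := hc.exists_isMaxOn hne (continuous_nc θ).continuousOn
  have hK : IsCompact (Ω ∩ {y | nc θ y = nc θ q}) :=
    hc.inter_right (isClosed_eq (continuous_nc θ) continuous_const)
  obtain ⟨p, hp, hpm⟩ := hK.exists_isMaxOn ⟨q, hq, rfl⟩ (continuous_tc θ).continuousOn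
  refine ⟨p, hp.1, fun y hy => ?_, fun y hy hyp => ?_⟩
  · rw [show nc θ p = nc θ q from hp.2]; exact hqm hy
  · exact hpm ⟨hy, hyp.trans hp.2⟩

lemma IsExtremeContact.unique {Ω : Set Plane} {θ : ℝ} {p q : Plane}
    (hp : IsExtremeContact Ω θ p) (hq : IsExtremeContact Ω θ q) : p = q := by
  have h := le_antisymm (hq.2.1 p hp.1) (hp.2.1 q hq.1)
  exact eq_of_nc_tc h (le_antisymm (hq.2.2 p hp.1 h) (hp.2.2 q hq.1 h.symm))

/-- The points of `Ω` having an outer normal `n_(θ+α)` with `0 < α ≤ δ`. -/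
def arc (Ω : Set Plane) (δ θ : ℝ) : Set Plane :=
  {a | a ∈ Ω ∧ ∃ α, 0 < α ∧ α ≤ δ ∧ ∀ y ∈ Ω, nc (θ + α) y ≤ nc (θ + α) a}

/-- Signs and the bound `tan α ≤ tan δ` (with the denominator cleared) on an angular step. -/
lemma tan_bounds {δ α : ℝ} (hδ' : δ < Real.pi / 2) (hα : 0 < α) (hα' : α ≤ δ) :
    0 < Real.cos α ∧ 0 < Real.sin α ∧ Real.sin α ≤ Real.tan δ * Real.cos α := by
  have h1 : 0 < Real.cos α := Real.cos_pos_of_mem_Ioo ⟨by linarith, by linarith⟩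
  refine ⟨h1, Real.sin_pos_of_pos_of_lt_pi hα (by linarith), ?_⟩
  have : Real.tan α ≤ Real.tan δ := by
    rcases hα'.eq_or_lt with h | h
    · rw [h]
    · exact (Real.tan_lt_tan_of_lt_of_lt_pi_div_two (by linarith) hδ' h).le
  rwa [Real.tan_eq_sin_div_cos α, div_le_iff₀ h1] at this

/-- An arc lies between the contact points at its two end angles. The normal angles in `arc` exclude
`θ` and include `θ + δ`, so the upper bound uses that `q` is the last point of its face. -/
lemma arc_tc_le {Ω : Set Plane} {δ θ : ℝ} (hδ' : δ < Real.pi / 2)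
    {p q a : Plane} (hp : IsExtremeContact Ω θ p) (hq : IsExtremeContact Ω (θ + δ) q)
    (ha : a ∈ arc Ω δ θ) : tc θ p ≤ tc θ a ∧ tc θ a ≤ tc θ q := by
  obtain ⟨haΩ, α, hα, hαδ, hmax⟩ := ha
  obtain ⟨hcα, hsα, -⟩ := tan_bounds hδ' hα hαδ
  constructor
  · have h1 := hmax p hp.1
    have h2 := hp.2.1 a haΩ
    rw [nc_add, nc_add] at h1
    by_contra! h
    nlinarith
  · have hN := hq.2.1 a haΩ
    have h1 := hmax q hq.1
    have e1 := fun x => nc_add (θ + δ) (-(δ - α)) x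
    have e2 := fun x => tc_add (θ + δ) (-δ) x
    simp only [add_neg_cancel_right] at e2
    have : θ + δ + -(δ - α) = θ + α := by ring
    rw [this] at e1
    simp only [Real.cos_neg, Real.sin_neg] at e1 e2
    rw [e1, e1] at h1
    rw [e2, e2]
    have hcδ : 0 < Real.cos δ := Real.cos_pos_of_mem_Ioo ⟨by linarith, by linarith⟩
    have hsδ : 0 < Real.sin δ := Real.sin_pos_of_pos_of_lt_pi (by linarith) (by linarith)
    have hT : tc (θ + δ) a ≤ tc (θ + δ) q := by
      rcases hαδ.eq_or_lt with h | h
      · subst h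
        simp only [sub_self, Real.cos_zero, Real.sin_zero] at h1
        exact hq.2.2 a haΩ (by linarith)
      · obtain ⟨hc, hs, -⟩ := tan_bounds hδ' (α := δ - α) (by linarith) (by linarith)
        by_contra! h
        nlinarith
    nlinarith

/-- Two points of `∂Ω` whose normals `n_a`, `n_b` differ little have a nearly tangential difference
`d`, because `⟨d, n_a⟩` and `⟨d, n_b⟩` have opposite signs. -/
lemma arc_antilipschitz {Ω : Set Plane} {δ θ : ℝ} (hδ' : δ < Real.pi / 2)
    {a b : Plane} (ha : a ∈ arc Ω δ θ) (hb : b ∈ arc Ω δ θ) :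
    dist a b ≤ 1 / Real.cos δ * dist (tc θ a) (tc θ b) := by
  obtain ⟨haΩ, α, hα, hαδ, hamax⟩ := ha
  obtain ⟨hbΩ, β, hβ, hβδ, hbmax⟩ := hb
  obtain ⟨hc1, hs1, ht1⟩ := tan_bounds hδ' hα hαδ
  obtain ⟨hc2, hs2, ht2⟩ := tan_bounds hδ' hβ hβδ
  have hcδ : 0 < Real.cos δ := Real.cos_pos_of_mem_Ioo ⟨by linarith, by linarith⟩
  have htδ : 0 < Real.tan δ := Real.tan_pos_of_pos_of_lt_pi_div_two (by linarith) hδ'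
  have h1 := hamax b hbΩ
  have h2 := hbmax a haΩ
  rw [nc_add, nc_add] at h1 h2
  set u := tc θ a - tc θ b with hu
  set v := nc θ a - nc θ b with hv
  have k1 : 0 ≤ Real.cos α * v + Real.sin α * u := by rw [hu, hv]; linarith
  have k2 : Real.cos β * v + Real.sin β * u ≤ 0 := by rw [hu, hv]; linarith
  have key : v ^ 2 ≤ (Real.tan δ * u) ^ 2 := by
    rcases le_or_gt 0 u with h | h
    · have h3 : v ≤ 0 := by by_contra! h'; nlinarith [mul_nonneg hs2.le h]
      have h4 : -(Real.tan δ * u) ≤ v := by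
        by_contra! h'
        nlinarith [mul_le_mul_of_nonneg_right ht1 h]
      exact sq_le_sq' h4 (h3.trans (by positivity))
    · have h3 : 0 ≤ v := by by_contra! h'; nlinarith [mul_pos hs1 (neg_pos.2 h)]
      have h4 : v ≤ -(Real.tan δ * u) := by
        by_contra! h'
        nlinarith [mul_le_mul_of_nonneg_right ht2 (neg_pos.2 h).le]
      rw [← neg_sq (Real.tan δ * u)]
      exact sq_le_sq' (by linarith) h4
  rw [dist_eq_norm, Real.dist_eq]
  have hn := norm_sq_eq_nc_tc θ (a - b)
  rw [nc_sub, tc_sub, ← hu, ← hv] at hn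
  refine (sq_le_sq₀ (norm_nonneg _) (by positivity)).1 ?_
  rw [hn, mul_pow, sq_abs, ← hu]
  have : (1 / Real.cos δ) ^ 2 = 1 + Real.tan δ ^ 2 := by
    rw [Real.tan_eq_sin_div_cos]; field_simp; linarith [Real.sin_sq_add_cos_sq δ]
  rw [this]; nlinarith

lemma hausdorffMeasure_arc_le {Ω : Set Plane} {δ θ : ℝ} (hδ : 0 < δ) (hδ' : δ < Real.pi / 2)
    {p q : Plane} (hp : IsExtremeContact Ω θ p) (hq : IsExtremeContact Ω (θ + δ) q) :
    μH[1] (arc Ω δ θ) ≤ ENNReal.ofReal (1 / Real.cos δ * (tc θ q - tc θ p)) := by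
  have hcδ : 0 < Real.cos δ := Real.cos_pos_of_mem_Ioo ⟨by linarith, by linarith⟩
  set S := arc Ω δ θ
  have hinj : Set.InjOn (tc θ) S := fun a ha b hb hab => by
    have := arc_antilipschitz hδ' ha hb
    rw [hab, dist_self, mul_zero] at this
    exact dist_le_zero.1 this
  set g := Function.invFunOn (tc θ) S
  have hg : ∀ a ∈ S, g (tc θ a) = a := fun a ha => hinj.leftInvOn_invFunOn ha
  have hlip : LipschitzOnWith (1 / Real.cos δ).toNNReal g (tc θ '' S) := by
    apply LipschitzOnWith.of_dist_le_mul
    rintro _ ⟨a, ha, rfl⟩ _ ⟨b, hb, rfl⟩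
    rw [hg a ha, hg b hb, Real.coe_toNNReal _ (by positivity)]
    exact arc_antilipschitz hδ' ha hb
  have himg : g '' (tc θ '' S) = S := by
    rw [← Set.image_comp]
    exact (Set.image_congr hg).trans (Set.image_id' S)
  have h1 := hlip.hausdorffMeasure_image_le (d := 1) zero_le_one
  rw [himg, ENNReal.rpow_one, hausdorffMeasure_real] at h1
  have h2 : tc θ '' S ⊆ Set.Icc (tc θ p) (tc θ q) := by
    rintro _ ⟨a, ha, rfl⟩
    exact arc_tc_le hδ' hp hq ha
  have h3 := (measure_mono h2).trans_eq (Real.volume_Icc (a := tc θ p) (b := tc θ q))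
  refine h1.trans ((mul_le_mul_right h3 _).trans_eq ?_)
  rw [ENNReal.ofReal_mul (by positivity)]
  rfl

/-! ### Area of tangent sectors -/
lemma volume_triangle_le :
    volume {y : Plane | (0 ≤ y 0 ∧ y 0 ≤ 1) ∧ 0 ≤ y 1 ∧ y 1 ≤ y 0} ≤ ENNReal.ofReal (1 / 2) := by
  set R : Set (ℝ × ℝ) := {z | z.1 ∈ Set.Icc (0:ℝ) 1 ∧ z.2 ∈ Set.Icc 0 z.1} with hR
  have hmp := (volume_preserving_finTwoArrow ℝ).comp (PiLp.volume_preserving_ofLp (Fin 2))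
  have hRm : MeasurableSet R := by
    apply IsClosed.measurableSet
    have : R = {z : ℝ × ℝ | 0 ≤ z.1} ∩ {z | z.1 ≤ 1} ∩ ({z | 0 ≤ z.2} ∩ {z | z.2 ≤ z.1}) := by
      ext z; simp [hR]
    rw [this]
    exact ((isClosed_le (by fun_prop) (by fun_prop)).inter (isClosed_le (by fun_prop) (by fun_prop))).inter
      ((isClosed_le (by fun_prop) (by fun_prop)).inter (isClosed_le (by fun_prop) (by fun_prop)))
  have h1 := hmp.measure_preimage hRm.nullMeasurableSet
  have h2 : {y : Plane | (0 ≤ y 0 ∧ y 0 ≤ 1) ∧ 0 ≤ y 1 ∧ y 1 ≤ y 0} =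
      (MeasurableEquiv.finTwoArrow ∘ @WithLp.ofLp 2 (Fin 2 → ℝ)) ⁻¹' R := by
    ext y; simp [hR, MeasurableEquiv.finTwoArrow]
  rw [h2, h1, Measure.volume_eq_prod, Measure.prod_apply hRm]
  have h3 : ∀ x : ℝ, volume (Prod.mk x ⁻¹' R) =
      (Set.Icc (0:ℝ) 1).indicator (fun x => ENNReal.ofReal x) x := by
    intro x
    by_cases hx : x ∈ Set.Icc (0:ℝ) 1
    · rw [Set.indicator_of_mem hx]
      have : Prod.mk x ⁻¹' R = Set.Icc 0 x := by
        ext y; simp only [hR, Set.mem_preimage, Set.mem_ofPred_eq]; tauto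
      rw [this, Real.volume_Icc, sub_zero]
    · rw [Set.indicator_of_notMem hx]
      have : Prod.mk x ⁻¹' R = ∅ := by
        ext y; simp only [hR, Set.mem_preimage, Set.mem_ofPred_eq, Set.mem_empty_iff_false]; tauto
      rw [this, measure_empty]
  simp_rw [h3]
  rw [lintegral_indicator measurableSet_Icc,
    ← ofReal_integral_eq_lintegral_ofReal (f := fun x : ℝ => x) (Continuous.integrableOn_Icc continuous_id)]
  · rw [integral_Icc_eq_integral_Ioc, ← intervalIntegral.integral_of_le zero_le_one, integral_id]
    norm_num
  · filter_upwards [self_mem_ae_restrict measurableSet_Icc] with x hx using hx.1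

/-- A right triangle with apex `p`, leg `U` along `s τ_θ` and slope `t`. -/
lemma volume_wedge_le (p : Plane) (θ t U s : ℝ) (ht : 0 ≤ t) (hs : s = 1 ∨ s = -1) :
    volume {x : Plane | 0 ≤ s * tc θ (x - p) ∧ s * tc θ (x - p) ≤ U ∧ nc θ (x - p) ≤ 0 ∧
      -(t * (s * tc θ (x - p))) ≤ nc θ (x - p)} ≤ ENNReal.ofReal (1 / 2 * t * U ^ 2) := by
  have hss : s * s = 1 := by rcases hs with rfl | rfl <;> norm_num
  set m : Matrix (Fin 2) (Fin 2) ℝ :=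
    !![-Real.sin θ * U * s, -Real.cos θ * t * U; Real.cos θ * U * s, -Real.sin θ * t * U]
  set f : Plane →ₗ[ℝ] Plane := Matrix.toEuclideanLin m with hf
  have hdet : LinearMap.det f = s * t * U ^ 2 := by
    rw [hf, Matrix.toEuclideanLin_eq_toLin_orthonormal, LinearMap.det_toLin, Matrix.det_fin_two]
    simp [m]
    linear_combination (s * t * U ^ 2) * Real.sin_sq_add_cos_sq θ
  have hf0 : ∀ y, f y 0 = -Real.sin θ * U * s * y 0 + -Real.cos θ * t * U * y 1 := fun y => by
    simp [hf, m, Matrix.toLpLin_apply, dotProduct, Fin.sum_univ_two]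
  have hf1 : ∀ y, f y 1 = Real.cos θ * U * s * y 0 + -Real.sin θ * t * U * y 1 := fun y => by
    simp [hf, m, Matrix.toLpLin_apply, dotProduct, Fin.sum_univ_two]
  set T := {y : Plane | (0 ≤ y 0 ∧ y 0 ≤ 1) ∧ 0 ≤ y 1 ∧ y 1 ≤ y 0}
  have hsub : {x : Plane | 0 ≤ s * tc θ (x - p) ∧ s * tc θ (x - p) ≤ U ∧ nc θ (x - p) ≤ 0 ∧
      -(t * (s * tc θ (x - p))) ≤ nc θ (x - p)} ⊆ (fun x => p + x) '' (f '' T) := by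
    rintro x ⟨h1, h2, h3, h4⟩
    set u := s * tc θ (x - p) with hu
    set v := nc θ (x - p) with hv
    have hU : 0 ≤ U := h1.trans h2
    refine ⟨x - p, ⟨!₂[u / U, -v / (t * U)], ?_, ?_⟩, by simp⟩
    · simp only [T, Set.mem_ofPred_eq]
      refine ⟨⟨by simp; positivity, by simpa using div_le_one_of_le₀ h2 hU⟩, ?_, ?_⟩
      · simpa using div_nonneg (neg_nonneg.2 h3) (mul_nonneg ht hU)
      · rcases ht.eq_or_lt with rfl | ht
        · simp; positivity
        · rcases hU.eq_or_lt with rfl | hU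
          · simp
          · simp
            rw [div_le_div_iff₀ (by positivity) hU]
            nlinarith
    · have e1 : U * (u / U) = u := by
        rcases hU.eq_or_lt with rfl | hU
        · simp; linarith
        · field_simp
      have e2 : t * U * (-v / (t * U)) = -v := by
        rcases hU.eq_or_lt with rfl | hU
        · have : u = 0 := by linarith
          simp [this] at h4
          simp; linarith
        · rcases ht.eq_or_lt with rfl | ht
          · simp at h4 ⊢; linarith
          · field_simp
      apply eq_of_nc_tc (θ := θ)
      · rw [← hv, nc, hf0, hf1]
        simp
        linear_combination (-(t * U * (-v / (t * U)))) * Real.sin_sq_add_cos_sq θ - e2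
      · have : tc θ (x - p) = s * u := by rw [hu, ← mul_assoc, hss, one_mul]
        rw [this, tc, hf0, hf1]
        simp
        linear_combination (s * (U * (u / U))) * Real.sin_sq_add_cos_sq θ + s * e1
  refine (measure_mono hsub).trans ?_
  rw [Set.image_add_left, measure_preimage_add, Measure.addHaar_image_linearMap, hdet]
  refine (mul_le_mul_right volume_triangle_le _).trans_eq ?_
  rw [← ENNReal.ofReal_mul (abs_nonneg _)]
  congr 1
  have : |s| = 1 := by rcases hs with rfl | rfl <;> simp
  rw [abs_mul, abs_mul, this, abs_of_nonneg ht, abs_of_nonneg (sq_nonneg U)]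
  ring

/-- The part of the disc `closedBall c r` in the angular sector of opening `δ` with apex `p`,
bounded on one side by the ray from `p` in the direction `s τ_θ`, on the side opposite to `n_θ`.
Here `s = 1` for forward tangents and `s = -1` for backward tangents. -/
def tangentSector (c p : Plane) (r δ s θ : ℝ) : Set Plane :=
  {x | x ∈ Metric.closedBall c r ∧ 0 ≤ s * tc θ (x - p) ∧ nc θ (x - p) ≤ 0 ∧
    -(Real.tan δ * (s * tc θ (x - p))) ≤ nc θ (x - p)}

/-- In the frame at angle `θ`, a point of the sector has tangential coordinate at most the half chord
length at height `h`, up to the term `4 r² tan δ` that absorbs the opening of the sector. -/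
lemma volume_tangentSector_le {c p : Plane} {r δ s : ℝ} (θ : ℝ) (hp : p ∈ Metric.closedBall c r)
    (hδ : 0 < δ) (hδ' : δ < Real.pi / 2) (hs : s = 1 ∨ s = -1) :
    volume (tangentSector c p r δ s θ) ≤ ENNReal.ofReal (1 / 2 * Real.tan δ *
      (√(r ^ 2 - nc θ (p - c) ^ 2 + 4 * r ^ 2 * Real.tan δ) - s * tc θ (p - c)) ^ 2) := by
  have ht : 0 < Real.tan δ := Real.tan_pos_of_pos_of_lt_pi_div_two hδ hδ'
  refine (measure_mono ?_).trans (volume_wedge_le p θ (Real.tan δ) _ s ht.le hs)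
  rintro x ⟨hx, h1, h2, h3⟩
  refine ⟨h1, ?_, h2, h3⟩
  rw [mem_closedBall_iff_norm] at hx hp
  have hss : s ^ 2 = 1 := by rcases hs with rfl | rfl <;> norm_num
  have e1 : nc θ (x - p) = nc θ (x - c) - nc θ (p - c) := by simp only [nc_sub]; ring
  have e2 : tc θ (x - p) = tc θ (x - c) - tc θ (p - c) := by simp only [tc_sub]; ring
  have hn := norm_sq_eq_nc_tc θ (x - c)
  have hx2 : ‖x - c‖ ^ 2 ≤ r ^ 2 := pow_le_pow_left₀ (norm_nonneg _) hx 2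
  have b1 := abs_le.1 (abs_nc_le θ hp)
  have b2 := abs_le.1 (abs_tc_le θ hp)
  have b3 := abs_le.1 (abs_tc_le θ hx)
  set h := nc θ (p - c)
  set v := nc θ (x - p)
  set u := s * tc θ (x - p) with hu
  have hu2 : u ≤ 2 * r := by rcases hs with rfl | rfl <;> rw [hu, e2] <;> linarith
  have hr : 0 ≤ r := (norm_nonneg _).trans hx
  have hv : -(Real.tan δ * (2 * r)) ≤ v :=
    (neg_le_neg (mul_le_mul_of_nonneg_left hu2 ht.le)).trans h3
  have e3 : nc θ (x - c) = h + v := by linarith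
  have e4 : tc θ (x - c) = s * (u + s * tc θ (p - c)) := by
    rw [hu]; linear_combination (-tc θ (x - p) - tc θ (p - c)) * hss - e2
  rw [e3, e4, mul_pow, hss, one_mul] at hn
  rw [le_sub_iff_add_le]
  apply Real.le_sqrt_of_sq_le
  have : -(2 * h * v) ≤ 4 * r ^ 2 * Real.tan δ := by
    nlinarith [mul_nonneg (by linarith : 0 ≤ r + h) (by linarith : 0 ≤ -v)]
  nlinarith [sq_nonneg v]

/-! ### Coverings of the frontier and of the complement in the disc -/
lemma exists_nat_of_periodic {T : ℝ → Set Plane} (hT : ∀ θ, T (θ + 2 * Real.pi) = T θ)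
    {M : ℕ} (hM : 0 < M) {x : Plane} (m : ℤ) (hx : x ∈ T (m * (Real.pi / M))) :
    ∃ k ∈ Finset.range (2 * M), x ∈ T (k * (Real.pi / M)) := by
  have hM' : (0 : ℤ) < 2 * M := by positivity
  have hp : Function.Periodic T (2 * Real.pi) := hT
  refine ⟨(m % (2 * M)).toNat, ?_, ?_⟩
  · have := Int.emod_lt_of_pos m hM'
    have := Int.emod_nonneg m hM'.ne'
    rw [Finset.mem_range]; omega
  · have h0 := Int.emod_nonneg m hM'.ne'
    have h1 : (((m % (2 * M)).toNat : ℤ) : ℝ) = m - 2 * M * (m / (2 * M) : ℤ) := by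
      rw [Int.toNat_of_nonneg h0, Int.emod_def]; push_cast; ring
    rw [Int.cast_natCast] at h1
    have h2 : ((m % (2 * M)).toNat : ℝ) * (Real.pi / M) =
        m * (Real.pi / M) - (m / (2 * M) : ℤ) * (2 * Real.pi) := by
      rw [h1]; field_simp
    rw [h2, hp.sub_int_mul_eq]
    exact hx

lemma exists_int_step {δ : ℝ} (hδ : 0 < δ) (β : ℝ) :
    ∃ m : ℤ, ∃ α, 0 < α ∧ α ≤ δ ∧ β = m * δ + α := by
  refine ⟨⌈β / δ⌉ - 1, β - (⌈β / δ⌉ - 1 : ℤ) * δ, ?_, ?_, by ring⟩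
  · have := Int.ceil_lt_add_one (β / δ)
    have : ((⌈β / δ⌉ : ℝ) - 1) * δ < β := by rw [← lt_div_iff₀ hδ]; linarith
    push_cast; linarith
  · have := Int.le_ceil (β / δ)
    rw [div_le_iff₀ hδ] at this
    push_cast; linarith

lemma frontier_subset_iUnion_arc {Ω : Set Plane} (hc : IsCompact Ω) (hconv : Convex ℝ Ω)
    (hint : (interior Ω).Nonempty) {M : ℕ} (hM : 0 < M) :
    frontier Ω ⊆ ⋃ k ∈ Finset.range (2 * M), arc Ω (Real.pi / M) (k * (Real.pi / M)) := by
  intro a ha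
  have haΩ : a ∈ Ω := hc.isClosed.frontier_subset ha
  have hai : a ∉ interior Ω := ha.2
  obtain ⟨f, hf⟩ := geometric_hahn_banach_open_point hconv.interior isOpen_interior hai
  obtain ⟨ρ, hρ, β, hβ⟩ := exists_eq_mul_nc f
  have hρ0 : 0 < ρ := by
    refine hρ.lt_of_ne' fun h => ?_
    obtain ⟨y, hy⟩ := hint
    have := hf y hy
    simp [hβ, h] at this
  have hmax : ∀ y ∈ Ω, nc β y ≤ nc β a := by
    intro y hy
    have hy' : y ∈ closure (interior Ω) := by
      rw [hconv.closure_interior_eq_closure_of_nonempty_interior hint]; exact subset_closure hy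
    refine closure_minimal (s := interior Ω) (t := {y | nc β y ≤ nc β a}) ?_
      (isClosed_le (continuous_nc β) continuous_const) hy'
    intro z hz
    have := hf z hz
    rw [hβ, hβ] at this
    exact (lt_of_mul_lt_mul_left this hρ).le
  obtain ⟨m, α, hα, hαδ, rfl⟩ := exists_int_step (δ := Real.pi / M) (by positivity) β
  have hT : ∀ θ, arc Ω (Real.pi / M) (θ + 2 * Real.pi) = arc Ω (Real.pi / M) θ := by
    intro θ
    have : ∀ α x, nc (θ + 2 * Real.pi + α) x = nc (θ + α) x := fun α x => by
      rw [add_right_comm]; exact nc_periodic x _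
    simp only [arc, this]
  obtain ⟨k, hk, hk'⟩ := exists_nat_of_periodic (T := arc Ω (Real.pi / M)) hT hM m ⟨haΩ, α, hα, hαδ, hmax⟩
  exact Set.mem_biUnion hk hk'

lemma hausdorffMeasure_frontier_ne_top {Ω : Set Plane} (hc : IsCompact Ω) (hconv : Convex ℝ Ω)
    (hint : (interior Ω).Nonempty) : μH[1] (frontier Ω) ≠ ⊤ := by
  choose P hP using exists_isExtremeContact hc (hint.mono interior_subset)
  have hδ' : Real.pi / (3 : ℕ) < Real.pi / 2 := by push_cast; linarith [Real.pi_pos]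
  refine ((measure_mono (frontier_subset_iUnion_arc hc hconv hint three_pos)).trans_lt ?_).ne
  refine (measure_biUnion_lt_top (Finset.finite_toSet _) fun k _ => ?_)
  exact (hausdorffMeasure_arc_le (by positivity) hδ' (hP _) (hP _)).trans_lt ENNReal.ofReal_lt_top

/-- Turning in the sense `s`, there is a step of the grid `s m π / M` at whose start `x` does not
strictly exceed the support function of `Ω`, while at some angle within the step it reaches it.
This discrete substitute for a tangent line through `x` needs no continuity. -/
lemma exists_tangent_step {Ω : Set Plane} (hc : IsCompact Ω) (hconv : Convex ℝ Ω)
    (hne : Ω.Nonempty) {x : Plane} (hx : x ∉ Ω) {M : ℕ} (hM : 0 < M) {s : ℝ}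
    (hs : s = 1 ∨ s = -1) :
    ∃ m : ℤ, (∃ y ∈ Ω, nc (s * (m * (Real.pi / M))) x ≤ nc (s * (m * (Real.pi / M))) y) ∧
      ∃ α, 0 < α ∧ α ≤ Real.pi / M ∧
        ∀ y ∈ Ω, nc (s * (m * (Real.pi / M)) + s * α) y ≤ nc (s * (m * (Real.pi / M)) + s * α) x := by
  have hss : s * s = 1 := by rcases hs with rfl | rfl <;> norm_num
  obtain ⟨f, w, hf, hw⟩ := geometric_hahn_banach_closed_point hconv hc.isClosed hx
  obtain ⟨ρ, hρ, β, hβ⟩ := exists_eq_mul_nc f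
  have hneg : ∀ y ∈ Ω, nc (s * (s * β)) y < nc (s * (s * β)) x := by
    intro y hy
    have := (hf y hy).trans hw
    rw [hβ, hβ] at this
    rw [← mul_assoc, hss, one_mul]
    exact lt_of_mul_lt_mul_left this hρ
  -- `b` is the angle `β` of a line separating `x` from `Ω`, measured in the sense `s`.
  set b := s * β
  have hδ : 0 < Real.pi / M := by positivity
  obtain ⟨c, hcΩ⟩ := hne
  -- One of the opposite directions `0` and `π` works; both are grid angles modulo `2π`.
  obtain ⟨m₁, hm₁, hm₁b⟩ : ∃ m₁ : ℤ,
      (∃ y ∈ Ω, nc (s * (m₁ * (Real.pi / M))) x ≤ nc (s * (m₁ * (Real.pi / M))) y) ∧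
      m₁ * (Real.pi / M) < b := by
    obtain ⟨j, hj⟩ := exists_int_lt (b / (2 * Real.pi) - 1)
    have hj' : (j : ℝ) * (2 * Real.pi) + 2 * Real.pi < b := by
      have : (j + 1 : ℝ) < b / (2 * Real.pi) := by linarith
      rw [lt_div_iff₀ Real.two_pi_pos] at this; linarith
    have hper : ∀ (θ : ℝ) z, nc (s * (θ + j * (2 * Real.pi))) z = nc (s * θ) z := by
      intro θ z
      have h1 := (nc_periodic z).int_mul j (s * θ)
      have h2 := (nc_periodic z).sub_int_mul_eq (x := s * θ) j
      rcases hs with rfl | rfl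
      · convert h1 using 2; ring
      · convert h2 using 2; ring
    have hpi : ∀ z, nc (s * Real.pi) z = - nc 0 z := by
      intro z
      rcases hs with rfl | rfl <;> simp [nc]
    have hM' : (M : ℝ) ≠ 0 := by positivity
    rcases le_total (nc 0 x) (nc 0 c) with h | h
    · refine ⟨2 * M * j, ⟨c, hcΩ, ?_⟩, ?_⟩
      all_goals
        rw [show (((2 * M * j : ℤ)) : ℝ) * (Real.pi / M) = 0 + j * (2 * Real.pi) by
          push_cast; field_simp; ring]
      · rw [hper, hper, mul_zero]; exact h
      · linarith [Real.pi_pos]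
    · refine ⟨2 * M * j + M, ⟨c, hcΩ, ?_⟩, ?_⟩
      all_goals
        rw [show (((2 * M * j + M : ℤ)) : ℝ) * (Real.pi / M) = Real.pi + j * (2 * Real.pi) by
          push_cast; field_simp; ring]
      · rw [hper, hper, hpi, hpi]; linarith
      · linarith [Real.pi_pos]
  -- If no step qualifies, the grid condition propagates forever and `b` cannot exist.
  by_contra! hcon
  have hind : ∀ m : ℤ, m₁ ≤ m →
      ∃ y ∈ Ω, nc (s * (m * (Real.pi / M))) x ≤ nc (s * (m * (Real.pi / M))) y := by
    intro m hm
    induction m, hm using Int.leInduction with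
    | base => exact hm₁
    | succ m hm ih =>
      obtain ⟨y, hy, h⟩ := hcon m ih (Real.pi / M) hδ le_rfl
      refine ⟨y, hy, ?_⟩
      rw [show s * (((m + 1 : ℤ) : ℝ) * (Real.pi / M)) =
        s * (m * (Real.pi / M)) + s * (Real.pi / M) by push_cast; ring]
      exact h.le
  obtain ⟨m, α, hα, hαδ, hb⟩ := exists_int_step hδ b
  have hm : m₁ ≤ m := by
    have : (m₁ : ℝ) * (Real.pi / M) < (m + 1 : ℝ) * (Real.pi / M) := by linarith
    have := lt_of_mul_lt_mul_right this hδ.le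
    exact Int.lt_add_one_iff.1 (by exact_mod_cast this)
  obtain ⟨y, hy, h⟩ := hcon m (hind m hm) α hα hαδ
  rw [← mul_add, ← hb] at h
  exact absurd h (hneg y hy).not_gt

lemma diff_subset_iUnion_tangentSector {Ω : Set Plane} (hc : IsCompact Ω) (hconv : Convex ℝ Ω)
    (hne : Ω.Nonempty) {M : ℕ} (hM : 2 < M) {s : ℝ} (hs : s = 1 ∨ s = -1) {c : Plane} {r : ℝ}
    {P : ℝ → Plane} (hP : ∀ θ, IsExtremeContact Ω θ (P θ)) :
    Metric.closedBall c r \ Ω ⊆ ⋃ k ∈ Finset.range (2 * M),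
      tangentSector c (P (k * (Real.pi / M))) r (Real.pi / M) s (k * (Real.pi / M)) := by
  rintro x ⟨hxB, hx⟩
  have hM0 : 0 < M := by omega
  have hss : s * s = 1 := by rcases hs with rfl | rfl <;> norm_num
  have hδ' : Real.pi / M < Real.pi / 2 := by
    have : (2 : ℝ) < M := by exact_mod_cast hM
    exact div_lt_div_of_pos_left Real.pi_pos two_pos this
  obtain ⟨m, ⟨y, hy, hyx⟩, α, hα, hαδ, hmax⟩ := exists_tangent_step hc hconv hne hx hM0 hs
  have hT : ∀ θ, tangentSector c (P (θ + 2 * Real.pi)) r (Real.pi / M) s (θ + 2 * Real.pi) =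
      tangentSector c (P θ) r (Real.pi / M) s θ := by
    intro θ
    have h1 : ∀ x, nc (θ + 2 * Real.pi) x = nc θ x := fun x => nc_periodic x _
    have h2 : ∀ x, tc (θ + 2 * Real.pi) x = tc θ x := fun x => tc_periodic x _
    have h3 : P (θ + 2 * Real.pi) = P θ := by
      have := hP (θ + 2 * Real.pi)
      simp only [IsExtremeContact, h1, h2] at this
      exact IsExtremeContact.unique this (hP θ)
    simp only [tangentSector, h1, h2, h3]
  obtain ⟨m', hm'⟩ : ∃ m' : ℤ, s * (m * (Real.pi / M)) = m' * (Real.pi / M) := by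
    rcases hs with rfl | rfl
    · exact ⟨m, by ring⟩
    · exact ⟨-m, by push_cast; ring⟩
  rw [hm'] at hmax hyx
  obtain ⟨k, hk, hk'⟩ := exists_nat_of_periodic
    (T := fun θ => tangentSector c (P θ) r (Real.pi / M) s θ) hT hM0 m' (x := x) (by
    set θ := (m' : ℝ) * (Real.pi / M)
    obtain ⟨hcα, hsα, htα⟩ := tan_bounds hδ' hα hαδ
    have h1 := hyx.trans ((hP θ).2.1 y hy)
    have h2 := hmax _ (hP θ).1
    rw [nc_add, nc_add] at h2
    have hcs : Real.cos (s * α) = Real.cos α := by rcases hs with rfl | rfl <;> simp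
    have hsn : Real.sin (s * α) = s * Real.sin α := by rcases hs with rfl | rfl <;> simp
    rw [hcs, hsn] at h2
    have h3 : 0 ≤ Real.cos α * nc θ (x - P θ) + Real.sin α * (s * tc θ (x - P θ)) := by
      rw [nc_sub, tc_sub]; linarith
    have h4 : nc θ (x - P θ) ≤ 0 := by rw [nc_sub]; linarith
    have h5 : 0 ≤ s * tc θ (x - P θ) := by
      by_contra! h; nlinarith [mul_neg_of_pos_of_neg hsα h]
    refine ⟨hxB, h5, h4, ?_⟩
    by_contra! h
    nlinarith [mul_le_mul_of_nonneg_right htα h5])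
  exact Set.mem_biUnion hk hk'

/-! ### The inequality -/
lemma discrete_estimate {Ω : Set Plane} (hc : IsCompact Ω) (hconv : Convex ℝ Ω)
    (hint : (interior Ω).Nonempty) {c : Plane} {r : ℝ} (hr : 0 ≤ r)
    (hΩ : Ω ⊆ Metric.closedBall c r) {M : ℕ} (hM : 2 < M) :
    2 * r * perim Ω + Real.pi * r ^ 2 - area Ω ≤ 4 * r ^ 2 * (M *
      (Real.tan (Real.pi / M) + (1 / Real.cos (Real.pi / M) - 1) + Real.tan (Real.pi / M) ^ 2)) := by
  have hne : Ω.Nonempty := hint.mono interior_subset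
  have hM0 : 0 < M := by omega
  have hM' : (M : ℝ) ≠ 0 := by positivity
  have hδ0 : 0 < Real.pi / M := by positivity
  have hδ' : Real.pi / M < Real.pi / 2 := by
    have : (2 : ℝ) < M := by exact_mod_cast hM
    exact div_lt_div_of_pos_left Real.pi_pos two_pos this
  have harc := frontier_subset_iUnion_arc hc hconv hint hM0
  choose P hP using exists_isExtremeContact hc hne
  have hsec := fun s hs => diff_subset_iUnion_tangentSector (s := s) hc hconv hne hM hs (c := c)
    (r := r) hP
  have hPper : P (2 * Real.pi) = P 0 := by
    have := hP (2 * Real.pi)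
    simp only [IsExtremeContact, nc, tc, Real.cos_two_pi, Real.sin_two_pi] at this
    refine IsExtremeContact.unique (θ := 0) ?_ (hP 0)
    simpa only [IsExtremeContact, nc, tc, Real.cos_zero, Real.sin_zero] using this
  have h2M : ((2 * M : ℕ) : ℝ) * (Real.pi / M) = 2 * Real.pi := by push_cast; field_simp
  set δ := Real.pi / M with hδ
  have hcδ : 0 < Real.cos δ := Real.cos_pos_of_mem_Ioo ⟨by linarith, by linarith⟩
  have hcδ1 : Real.cos δ ≤ 1 := Real.cos_le_one δ
  have htδ : 0 < Real.tan δ := Real.tan_pos_of_pos_of_lt_pi_div_two hδ0 hδ'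
  set h : ℕ → ℝ := fun k => nc (k * δ) (P (k * δ) - c) with hh
  set p : ℕ → ℝ := fun k => tc (k * δ) (P (k * δ) - c) with hp
  have hPb : ∀ θ, P θ ∈ Metric.closedBall c r := fun θ => hΩ (hP θ).1
  have hh1 : ∀ k, |h k| ≤ r := fun k => abs_nc_le _ (mem_closedBall_iff_norm.1 (hPb _))
  have hp1 : ∀ k, |p k| ≤ r := fun k => abs_tc_le _ (mem_closedBall_iff_norm.1 (hPb _))
  have hhp : ∀ k, h k ^ 2 + p k ^ 2 ≤ r ^ 2 := fun k => by
    rw [← norm_sq_eq_nc_tc]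
    exact pow_le_pow_left₀ (norm_nonneg _) (mem_closedBall_iff_norm.1 (hPb _)) 2
  have hend : h (2 * M) = h 0 ∧ p (2 * M) = p 0 := by
    simp only [hh, hp, h2M, hPper]
    simp [nc, tc]
  -- The arc lengths `w k` telescope in `p`, leaving the Riemann sum of `h`.
  have hperim : perim Ω ≤ Real.tan δ * ∑ k ∈ Finset.range (2 * M), h k +
      2 * M * r * (1 / Real.cos δ - 1) := by
    set w : ℕ → ℝ := fun k =>
      1 / Real.cos δ * (Real.cos δ * p (k + 1) + Real.sin δ * h (k + 1) - p k) with hw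
    have hwk : ∀ k : ℕ, 1 / Real.cos δ * (tc (k * δ) (P (k * δ + δ)) - tc (k * δ) (P (k * δ))) = w k := by
      intro k
      have e := tc_add (k * δ + δ) (-δ) (P (k * δ + δ) - c)
      rw [add_neg_cancel_right, Real.cos_neg, Real.sin_neg] at e
      have e2 : ((k + 1 : ℕ) : ℝ) * δ = k * δ + δ := by push_cast; ring
      simp only [hw, hh, hp, e2]
      congr 1
      linear_combination e - tc_sub (k * δ) (P (k * δ + δ)) c + tc_sub (k * δ) (P (k * δ)) c
    -- The last contact point of a step belongs to the arc, so its projection is not behind.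
    have hw0 : ∀ k, 0 ≤ w k := by
      intro k
      rw [← hwk]
      have hq : P (k * δ + δ) ∈ arc Ω δ (k * δ) := ⟨(hP _).1, δ, hδ0, le_rfl, (hP _).2.1⟩
      have := (arc_tc_le hδ' (hP _) (hP _) hq).1
      exact mul_nonneg (by positivity) (by linarith)
    have h1 : μH[1] (frontier Ω) ≤ ENNReal.ofReal (∑ k ∈ Finset.range (2 * M), w k) := by
      rw [ENNReal.ofReal_sum_of_nonneg fun k _ => hw0 k]
      refine (measure_mono harc).trans ((measure_biUnion_finset_le _ _).trans ?_)
      refine Finset.sum_le_sum fun k _ => ?_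
      rw [← hwk]
      exact hausdorffMeasure_arc_le hδ0 hδ' (hP _) (hP _)
    have h2 : perim Ω ≤ ∑ k ∈ Finset.range (2 * M), w k :=
      ENNReal.toReal_le_of_le_ofReal (Finset.sum_nonneg fun k _ => hw0 k) h1
    have hsp : ∑ k ∈ Finset.range (2 * M), p (k + 1) = ∑ k ∈ Finset.range (2 * M), p k := by
      have := Finset.sum_range_sub p (2 * M)
      rw [Finset.sum_sub_distrib, hend.2] at this; linarith
    have hsh : ∑ k ∈ Finset.range (2 * M), h (k + 1) = ∑ k ∈ Finset.range (2 * M), h k := by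
      have := Finset.sum_range_sub h (2 * M)
      rw [Finset.sum_sub_distrib, hend.1] at this; linarith
    have h3 : ∑ k ∈ Finset.range (2 * M), w k = Real.tan δ * ∑ k ∈ Finset.range (2 * M), h k +
        (1 / Real.cos δ - 1) * ∑ k ∈ Finset.range (2 * M), -p k := by
      rw [hw, ← Finset.mul_sum, Finset.sum_sub_distrib, Finset.sum_add_distrib, ← Finset.mul_sum,
        ← Finset.mul_sum, hsp, hsh, Real.tan_eq_sin_div_cos, Finset.sum_neg_distrib]
      field_simp; ring
    have h4 : ∑ k ∈ Finset.range (2 * M), -p k ≤ 2 * M * r := by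
      refine (Finset.sum_le_card_nsmul _ _ r fun k _ => ?_).trans_eq ?_
      · linarith [(abs_le.1 (hp1 k)).1]
      · simp
    have h5 : 0 ≤ 1 / Real.cos δ - 1 := by
      rw [sub_nonneg, le_div_iff₀ hcδ]; linarith
    nlinarith [mul_le_mul_of_nonneg_left h4 h5]
  -- Adding the forward and backward coverings cancels the cross terms `√(r² - h²) p`.
  have harea : Real.pi * r ^ 2 - area Ω ≤ Real.tan δ * ∑ k ∈ Finset.range (2 * M), (r ^ 2 - h k ^ 2)
      + 4 * M * r ^ 2 * Real.tan δ ^ 2 := by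
    set Q : ℕ → ℝ := fun k => √(r ^ 2 - h k ^ 2 + 4 * r ^ 2 * Real.tan δ) with hQ
    have hone : ∀ s : ℝ, s = 1 ∨ s = -1 → Real.pi * r ^ 2 - area Ω ≤
        ∑ k ∈ Finset.range (2 * M), 1 / 2 * Real.tan δ * (Q k - s * p k) ^ 2 := by
      intro s hs
      have h1 : volume (Metric.closedBall c r \ Ω) ≤ ENNReal.ofReal
          (∑ k ∈ Finset.range (2 * M), 1 / 2 * Real.tan δ * (Q k - s * p k) ^ 2) := by
        rw [ENNReal.ofReal_sum_of_nonneg fun k _ => by positivity]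
        refine (measure_mono (hsec s hs)).trans ((measure_biUnion_finset_le _ _).trans ?_)
        exact Finset.sum_le_sum fun k _ => volume_tangentSector_le _ (hPb _) hδ0 hδ' hs
      have h2 := ENNReal.toReal_le_of_le_ofReal (Finset.sum_nonneg fun k _ => by positivity) h1
      refine le_trans (le_of_eq ?_) h2
      rw [measure_sdiff hΩ hc.measurableSet.nullMeasurableSet hc.measure_lt_top.ne,
        ENNReal.toReal_sub_of_le (measure_mono hΩ) Metric.isBounded_closedBall.measure_lt_top.ne,
        EuclideanSpace.volume_closedBall_fin_two, area]
      congr 1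
      rw [ENNReal.toReal_mul, ENNReal.toReal_pow, ENNReal.toReal_ofReal hr, mul_comm,
        ENNReal.toReal_ofReal Real.pi_pos.le]
    have ha := hone 1 (Or.inl rfl)
    have hb := hone (-1) (Or.inr rfl)
    have hsum : ∑ k ∈ Finset.range (2 * M), 1 / 2 * Real.tan δ * (Q k - 1 * p k) ^ 2 +
        ∑ k ∈ Finset.range (2 * M), 1 / 2 * Real.tan δ * (Q k - -1 * p k) ^ 2 ≤
        ∑ k ∈ Finset.range (2 * M),
          (2 * (Real.tan δ * (r ^ 2 - h k ^ 2)) + 4 * r ^ 2 * Real.tan δ ^ 2) := by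
      rw [← Finset.sum_add_distrib]
      refine Finset.sum_le_sum fun k _ => ?_
      have hQk : Q k ^ 2 = r ^ 2 - h k ^ 2 + 4 * r ^ 2 * Real.tan δ :=
        Real.sq_sqrt (by nlinarith [hhp k, sq_nonneg (p k), mul_nonneg (sq_nonneg r) htδ.le])
      have := mul_le_mul_of_nonneg_left (hhp k) htδ.le
      nlinarith
    rw [Finset.sum_add_distrib, ← Finset.mul_sum _ _ 2, ← Finset.mul_sum _ _ (Real.tan δ)] at hsum
    simp only [Finset.sum_const, Finset.card_range, nsmul_eq_mul] at hsum
    push_cast at hsum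
    linarith
  have hfin : ∑ k ∈ Finset.range (2 * M), (2 * r * h k + (r ^ 2 - h k ^ 2)) ≤ 4 * M * r ^ 2 := by
    refine (Finset.sum_le_card_nsmul _ _ (2 * r ^ 2) fun k _ => ?_).trans_eq ?_
    · nlinarith [sq_nonneg (r - h k)]
    · simp; ring
  rw [Finset.sum_add_distrib, ← Finset.mul_sum] at hfin
  have k1 := mul_le_mul_of_nonneg_left hperim (by positivity : 0 ≤ 2 * r)
  have k2 := mul_le_mul_of_nonneg_left hfin htδ.le
  linarith

/-- With `x = 1 / M`, the limit is the derivative at `x = 0` of the bracket with `π / M` replaced by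
`π x`. -/
lemma tendsto_error : Filter.Tendsto (fun M : ℕ => (M : ℝ) *
    (Real.tan (Real.pi / M) + (1 / Real.cos (Real.pi / M) - 1) + Real.tan (Real.pi / M) ^ 2))
    Filter.atTop (nhds Real.pi) := by
  have hd : HasDerivAt (fun x : ℝ => Real.tan (Real.pi * x) + (1 / Real.cos (Real.pi * x) - 1) +
      Real.tan (Real.pi * x) ^ 2) Real.pi 0 := by
    have h0 : HasDerivAt (fun x : ℝ => Real.pi * x) Real.pi 0 := by
      simpa using (hasDerivAt_id (0:ℝ)).const_mul Real.pi
    have h1 : HasDerivAt (fun x : ℝ => Real.tan (Real.pi * x)) Real.pi 0 := by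
      have := (Real.hasDerivAt_tan (x := Real.pi * 0) (by simp)).comp (0:ℝ) h0
      simpa [Function.comp_def] using this
    have h2 : HasDerivAt (fun x : ℝ => 1 / Real.cos (Real.pi * x) - 1) 0 0 := by
      have := ((h0.cos).inv (by simp)).sub_const 1
      simpa [one_div] using this
    have h3 := (h1.fun_add h2).fun_add (h1.fun_pow 2)
    simpa only [mul_zero, Real.tan_zero, add_zero, Nat.cast_ofNat, zero_pow one_ne_zero, zero_mul,
      show 2 - 1 = 1 from rfl] using h3
  have h := hd.tendsto_slope_zero_right.comp
    (tendsto_inv_atTop_nhdsGT_zero.comp (tendsto_natCast_atTop_atTop (R := ℝ)))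
  refine h.congr fun M => ?_
  simp [div_eq_mul_inv]

lemma le_area {Ω : Set Plane} (hc : IsCompact Ω) (hconv : Convex ℝ Ω)
    (hint : (interior Ω).Nonempty) {c : Plane} {r : ℝ} (hr : 0 ≤ r)
    (hΩ : Ω ⊆ Metric.closedBall c r) : r * (2 * perim Ω - 3 * Real.pi * r) ≤ area Ω := by
  have h := ge_of_tendsto (tendsto_error.const_mul (4 * r ^ 2))
    ((Filter.eventually_gt_atTop 2).mono fun M hM => discrete_estimate hc hconv hint hr hΩ hM)
  linarith

/-! ### The disc -/
lemma circumradius_closedBall (c : Plane) {r : ℝ} (hr : 0 < r) :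
    circumradius (Metric.closedBall c r) = r := by
  apply IsLeast.csInf_eq
  refine ⟨⟨hr.le, c, subset_rfl⟩, ?_⟩
  rintro r' ⟨hr', x, hx⟩
  have h := measure_mono (μ := volume) hx
  rw [EuclideanSpace.volume_closedBall_fin_two, EuclideanSpace.volume_closedBall_fin_two,
    ← ENNReal.ofReal_pow hr.le, ← ENNReal.ofReal_pow hr',
    ← ENNReal.ofReal_mul (by positivity), ← ENNReal.ofReal_mul (by positivity),
    ENNReal.ofReal_le_ofReal_iff (by positivity)] at h
  exact (sq_le_sq₀ hr.le hr').1 (le_of_mul_le_mul_right h Real.pi_pos)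

/-- The point at polar angle `θ` on the circle with centre `c` and radius `r`. -/
noncomputable def circlePoint (c : Plane) (r θ : ℝ) : Plane := c + !₂[r * Real.cos θ, r * Real.sin θ]

lemma tc_circlePoint_sub (c : Plane) (r θ φ : ℝ) :
    tc φ (circlePoint c r (φ + θ) - c) = r * Real.sin θ := by
  simp [tc, circlePoint, Real.sin_add, Real.cos_add]
  linear_combination (r * Real.sin θ) * Real.sin_sq_add_cos_sq φ

lemma continuous_circlePoint (c : Plane) (r : ℝ) : Continuous (circlePoint c r) := by
  unfold circlePoint; fun_prop

lemma injOn_circlePoint (c : Plane) {r : ℝ} (hr : 0 < r) :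
    Set.InjOn (circlePoint c r) (Set.Ico 0 (2 * Real.pi)) := by
  intro a ha b hb hab
  have h0 := congrArg (fun x : Plane => x 0) hab
  have h1 := congrArg (fun x : Plane => x 1) hab
  simp [circlePoint, hr.ne'] at h0 h1
  have h2 : (a : Real.Angle) = b := Real.Angle.cos_sin_inj h0 h1
  obtain ⟨n, hn⟩ := Real.Angle.angle_eq_iff_two_pi_dvd_sub.1 h2
  have hpi := Real.two_pi_pos
  have hn1 : (n : ℝ) < 1 := by
    by_contra! h; nlinarith [ha.1, ha.2, hb.1, hb.2]
  have hn2 : (-1 : ℝ) < n := by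
    by_contra! h; nlinarith [ha.1, ha.2, hb.1, hb.2]
  have : n = 0 := by
    have : n < 1 := by exact_mod_cast hn1
    have : -1 < n := by exact_mod_cast hn2
    omega
  rw [this] at hn; simp at hn; linarith

/-- The arc of opening `δ` projects onto an interval of length at least `r sin δ` of the tangent line
at its first point. -/
lemma le_hausdorffMeasure_circle_arc (c : Plane) (r : ℝ) {δ : ℝ} (hδ : 0 < δ)
    (φ : ℝ) : ENNReal.ofReal (r * Real.sin δ) ≤
      μH[1] (circlePoint c r '' Set.Ico φ (φ + δ)) := by
  set S := circlePoint c r '' Set.Ico φ (φ + δ)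
  have hlip : LipschitzWith 1 (fun x : Plane => tc φ (x - c)) := by
    apply LipschitzWith.of_dist_le_mul
    intro x y
    rw [Real.dist_eq, dist_eq_norm, ← tc_sub]
    simpa using abs_tc_le φ (x := x - y) le_rfl
  have h1 := hlip.hausdorffMeasure_image_le (d := 1) zero_le_one S
  rw [ENNReal.rpow_one, ENNReal.coe_one, one_mul, hausdorffMeasure_real] at h1
  refine le_trans ?_ h1
  have h2 : Set.Ico 0 (r * Real.sin δ) ⊆ (fun x : Plane => tc φ (x - c)) '' S := by
    have hsub := intermediate_value_Ico hδ.le (f := fun α => r * Real.sin α)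
      (by fun_prop)
    simp only [Real.sin_zero, mul_zero] at hsub
    intro u hu
    obtain ⟨α, hα, rfl⟩ := hsub hu
    exact ⟨_, ⟨φ + α, ⟨by linarith [hα.1], by linarith [hα.2]⟩, rfl⟩, tc_circlePoint_sub _ _ _ _⟩
  refine le_trans ?_ (measure_mono h2)
  rw [Real.volume_Ico, sub_zero]

lemma le_hausdorffMeasure_sphere (c : Plane) {r : ℝ} (hr : 0 < r) {M : ℕ} (hM : 0 < M) :
    ENNReal.ofReal (2 * r * (M * Real.sin (Real.pi / M))) ≤ μH[1] (Metric.sphere c r) := by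
  set δ := Real.pi / M with hδdef
  have hM' : (M : ℝ) ≠ 0 := by positivity
  have hδ : 0 < δ := by positivity
  set A : ℕ → Set Plane := fun k => circlePoint c r '' Set.Ico (k * δ) (k * δ + δ) with hA
  have hI : ∀ k ∈ Finset.range (2 * M), Set.Ico (k * δ) (k * δ + δ) ⊆ Set.Ico 0 (2 * Real.pi) := by
    intro k hk
    apply Set.Ico_subset_Ico (by positivity)
    have : (k + 1 : ℝ) ≤ 2 * M := by exact_mod_cast Finset.mem_range.1 hk
    have := mul_le_mul_of_nonneg_right this hδ.le
    have h2 : 2 * M * δ = 2 * Real.pi := by rw [hδdef]; field_simp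
    linarith
  have hdisj : Set.PairwiseDisjoint (↑(Finset.range (2 * M))) A := by
    intro i hi j hj hij
    refine Set.disjoint_image_image fun x hx y hy hxy => ?_
    have := injOn_circlePoint c hr (hI i hi hx) (hI j hj hy) hxy
    subst this
    rcases lt_or_gt_of_ne hij with h | h
    · have h' : (i + 1 : ℝ) ≤ j := by exact_mod_cast h
      nlinarith [hx.2, hy.1]
    · have h' : (j + 1 : ℝ) ≤ i := by exact_mod_cast h
      nlinarith [hx.1, hy.2]
  have hmeas : ∀ k ∈ Finset.range (2 * M), MeasurableSet (A k) := fun k hk =>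
    measurableSet_Ico.image_of_continuousOn_injOn (continuous_circlePoint c r).continuousOn
      ((injOn_circlePoint c hr).mono (hI k hk))
  have hsub : (⋃ k ∈ Finset.range (2 * M), A k) ⊆ Metric.sphere c r := by
    apply Set.iUnion₂_subset
    rintro k hk _ ⟨θ, -, rfl⟩
    rw [mem_sphere_iff_norm, ← sq_eq_sq₀ (norm_nonneg _) hr.le, EuclideanSpace.norm_sq_eq]
    simp [circlePoint, mul_pow]
    linear_combination r ^ 2 * Real.sin_sq_add_cos_sq θ
  refine le_trans ?_ (measure_mono hsub)
  rw [measure_biUnion_finset hdisj hmeas]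
  refine le_trans ?_ (Finset.card_nsmul_le_sum _ _ _ fun k _ =>
    le_hausdorffMeasure_circle_arc c r hδ (k * δ))
  rw [Finset.card_range, ← ENNReal.ofReal_nsmul]
  apply ENNReal.ofReal_le_ofReal
  simp; linarith

lemma tendsto_mul_sin : Filter.Tendsto (fun M : ℕ => (M : ℝ) * Real.sin (Real.pi / M))
    Filter.atTop (nhds Real.pi) := by
  have hd : HasDerivAt (fun x : ℝ => Real.sin (Real.pi * x)) Real.pi 0 := by
    simpa using ((hasDerivAt_id (0:ℝ)).const_mul Real.pi).sin
  have h := hd.tendsto_slope_zero_right.comp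
    (tendsto_inv_atTop_nhdsGT_zero.comp (tendsto_natCast_atTop_atTop (R := ℝ)))
  refine h.congr fun M => ?_
  simp [div_eq_mul_inv]

lemma ofReal_le_hausdorffMeasure_sphere (c : Plane) {r : ℝ} (hr : 0 < r) :
    ENNReal.ofReal (2 * r * Real.pi) ≤ μH[1] (Metric.sphere c r) :=
  le_of_tendsto (ENNReal.tendsto_ofReal (tendsto_mul_sin.const_mul (2 * r)))
    ((Filter.eventually_gt_atTop 0).mono fun _ hM => le_hausdorffMeasure_sphere c hr hM)

theorem improved_circumradius_inequality (Ω : Set (EuclideanSpace ℝ (Fin 2)))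
    (hc : IsCompact Ω) (hconv : Convex ℝ Ω) (hne : Ω.Nonempty)
    (hint : (interior Ω).Nonempty) :
    area Ω ≥ circumradius Ω * (2 * perim Ω - 3 * Real.pi * circumradius Ω) ∧
      ((∃ x r, 0 < r ∧ Ω = Metric.closedBall x r) →
        area Ω = circumradius Ω * (2 * perim Ω - 3 * Real.pi * circumradius Ω)) := by
  constructor
  · have hclosed : IsClosed {r : ℝ | r * (2 * perim Ω - 3 * Real.pi * r) ≤ area Ω} :=
      isClosed_le (by fun_prop) continuous_const
    have hmem : circumradius Ω ∈ closure {r : ℝ | 0 ≤ r ∧ ∃ x, Ω ⊆ Metric.closedBall x r} := by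
      obtain ⟨r, hr⟩ := hc.isBounded.subset_closedBall 0
      refine csInf_mem_closure ⟨max r 0, le_max_right _ _, 0, ?_⟩ ⟨0, fun r hr => hr.1⟩
      exact hr.trans (Metric.closedBall_subset_closedBall (le_max_left _ _))
    refine closure_minimal ?_ hclosed hmem
    rintro r ⟨hr, x, hx⟩
    exact le_area hc hconv hint hr hx
  · rintro ⟨c, r, hr, rfl⟩
    rw [circumradius_closedBall c hr]
    refine le_antisymm ?_ (le_area hc hconv hint hr.le subset_rfl)
    have harea : area (Metric.closedBall c r) = r ^ 2 * Real.pi := by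
      rw [area, EuclideanSpace.volume_closedBall_fin_two, ENNReal.toReal_mul, ENNReal.toReal_pow,
        ENNReal.toReal_ofReal hr.le, ENNReal.toReal_ofReal Real.pi_pos.le]
    -- `μH[1]` of the circle must be finite here, since `toReal` sends `⊤` to `0`.
    have hfin : μH[1] (frontier (Metric.closedBall c r)) ≠ ⊤ :=
      hausdorffMeasure_frontier_ne_top hc hconv hint
    have hlow : 2 * r * Real.pi ≤ perim (Metric.closedBall c r) := by
      rw [perim, ← ENNReal.ofReal_le_iff_le_toReal hfin, frontier_closedBall c hr.ne']
      exact ofReal_le_hausdorffMeasure_sphere c hr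
    rw [harea]
    nlinarith [mul_le_mul_of_nonneg_left hlow hr.le]
end
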